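/- arXiv:1310.2648 — 11 statements merged into one kernel-verified Lean document; each statement's English description precedes it below -/
import Mathlib

section
/- Let Pr be a pmf on S and let P be the conditional pmf generated by Pr. Then for every player i ∈ {1,…,N}: ∑_{ω∈Ω} ∑_{α∈𝒜} π(ω)P(α|ω)û_i(α, ω) = ∑_{s∈S} Pr(s)h_i(s). -/
open Finset

/-- If `P` is the conditional pmf generated by the pmf `Pr` on pure-strategy
profiles, then for every player `i`,
`∑_ω ∑_α π(ω) P(α|ω) ûᵢ(α,ω) = ∑_s Pr(s) hᵢ(s)`,
where `hᵢ(s) = ∑_ω π(ω) ûᵢ(b^{(s)}(ω), ω)`. -/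
theorem statement1
    (N : ℕ) (hN : 1 ≤ N)
    (Ω0 : Type) (Ωp : Fin N → Type) (A : Fin N → Type)
    [Fintype Ω0] [Nonempty Ω0]
    [∀ i, Fintype (Ωp i)] [∀ i, Nonempty (Ωp i)] [∀ i, DecidableEq (Ωp i)]
    [∀ i, Fintype (A i)] [∀ i, Nonempty (A i)] [∀ i, DecidableEq (A i)]
    (π : Ω0 × (∀ j, Ωp j) → ℝ)
    (hπ0 : ∀ ω, 0 ≤ π ω) (hπ1 : ∑ ω : Ω0 × (∀ j, Ωp j), π ω = 1)
    (U : ∀ _ : Fin N, (∀ j, A j) → Ω0 × (∀ j, Ωp j) → ℝ)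
    (umax : Fin N → ℝ) (humax : ∀ i, 0 ≤ umax i)
    (hU : ∀ i α ω, U i α ω ∈ Set.Icc 0 (umax i))
    (Pr : (∀ j, Ωp j → A j) → ℝ)
    (hPr0 : ∀ s, 0 ≤ Pr s) (hPr1 : ∑ s : ∀ j, Ωp j → A j, Pr s = 1)
    (P : Ω0 × (∀ j, Ωp j) → (∀ j, A j) → ℝ)
    (hgen : ∀ ω α, P ω α =
      ∑ s : ∀ j, Ωp j → A j, Pr s * (if (fun j => s j (ω.2 j)) = α then 1 else 0)) :
    ∀ i : Fin N,
      ∑ ω : Ω0 × (∀ j, Ωp j), ∑ α : ∀ j, A j, π ω * P ω α * U i α ω =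
      ∑ s : ∀ j, Ωp j → A j, Pr s *
        (∑ ω : Ω0 × (∀ j, Ωp j), π ω * U i (fun j => s j (ω.2 j)) ω) := by
  intro i
  simp_rw [Finset.mul_sum]
  rw [Finset.sum_comm (s := (Finset.univ : Finset (∀ j, Ωp j → A j)))]
  refine Finset.sum_congr rfl fun ω _ => ?_
  simp_rw [hgen, Finset.mul_sum, Finset.sum_mul]
  rw [Finset.sum_comm]
  refine Finset.sum_congr rfl fun s _ => ?_
  rw [Finset.sum_eq_single (fun j => s j (ω.2 j))]
  · rw [if_pos rfl]
    ring
  · intro α _ h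
    rw [if_neg (Ne.symm h)]
    ring
  · intro h
    exact absurd (Finset.mem_univ _) h
end

section
/- Let Pr be a pmf on S and let P be the conditional pmf generated by Pr. Then for every player i ∈ {1,…,N} and every pure strategy r ∈ S_i: ∑_{ω∈Ω} ∑_{α∈𝒜} π(ω)P(α|ω)û_i((r(ω_i), α_{-i}), ω) = ∑_{s∈S} Pr(s)h_i(r, s_{-i}). -/
open Finset

/-- If `P` is the conditional pmf generated by the pmf `Pr` on pure-strategy
profiles, then for every player `i` and every pure strategy `r ∈ Sᵢ`,
`∑_ω ∑_α π(ω) P(α|ω) ûᵢ((r(ωᵢ), α_{-i}), ω) = ∑_s Pr(s) hᵢ(r, s_{-i})`. -/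
theorem statement2
    (N : ℕ) (hN : 1 ≤ N)
    (Ω0 : Type) (Ωp : Fin N → Type) (A : Fin N → Type)
    [Fintype Ω0] [Nonempty Ω0]
    [∀ i, Fintype (Ωp i)] [∀ i, Nonempty (Ωp i)] [∀ i, DecidableEq (Ωp i)]
    [∀ i, Fintype (A i)] [∀ i, Nonempty (A i)] [∀ i, DecidableEq (A i)]
    (π : Ω0 × (∀ j, Ωp j) → ℝ)
    (hπ0 : ∀ ω, 0 ≤ π ω) (hπ1 : ∑ ω : Ω0 × (∀ j, Ωp j), π ω = 1)
    (U : ∀ _ : Fin N, (∀ j, A j) → Ω0 × (∀ j, Ωp j) → ℝ)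
    (umax : Fin N → ℝ) (humax : ∀ i, 0 ≤ umax i)
    (hU : ∀ i α ω, U i α ω ∈ Set.Icc 0 (umax i))
    (Pr : (∀ j, Ωp j → A j) → ℝ)
    (hPr0 : ∀ s, 0 ≤ Pr s) (hPr1 : ∑ s : ∀ j, Ωp j → A j, Pr s = 1)
    (P : Ω0 × (∀ j, Ωp j) → (∀ j, A j) → ℝ)
    (hgen : ∀ ω α, P ω α =
      ∑ s : ∀ j, Ωp j → A j, Pr s * (if (fun j => s j (ω.2 j)) = α then 1 else 0)) :
    ∀ (i : Fin N) (r : Ωp i → A i),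
      ∑ ω : Ω0 × (∀ j, Ωp j), ∑ α : ∀ j, A j,
        π ω * P ω α * U i (Function.update α i (r (ω.2 i))) ω =
      ∑ s : ∀ j, Ωp j → A j, Pr s *
        (∑ ω : Ω0 × (∀ j, Ωp j),
          π ω * U i (fun j => (Function.update s i r) j (ω.2 j)) ω) := by
  intro i r
  have key : ∀ (s : ∀ j, Ωp j → A j) (ω : Ω0 × (∀ j, Ωp j)),
      (fun j => (Function.update s i r) j (ω.2 j)) =
        Function.update (fun j => s j (ω.2 j)) i (r (ω.2 i)) := by
    intro s ω
    funext j
    by_cases h : j = i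
    · subst h; simp
    · simp [h]
  simp_rw [key, Finset.mul_sum]
  rw [Finset.sum_comm (s := (univ : Finset (∀ j, Ωp j → A j)))]
  refine Finset.sum_congr rfl fun ω _ => ?_
  simp_rw [hgen, Finset.mul_sum, Finset.sum_mul]
  rw [Finset.sum_comm]
  refine Finset.sum_congr rfl fun s _ => ?_
  rw [Finset.sum_eq_single (fun j => s j (ω.2 j))]
  · rw [if_pos rfl]; ring
  · intro b _ hb
    rw [if_neg (Ne.symm hb)]; ring
  · intro h; exact absurd (Finset.mem_univ _) h
end

section
/- Let Pr be a pmf on S and let P be the conditional pmf generated by Pr. Then Pr satisfies the virtual CCE constraints if and only if P is a CCE for the stochastic game. -/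
open Finset

/-- `Pr` satisfies the virtual CCE constraints iff the generated conditional
pmf `P` is a CCE for the stochastic game. -/
theorem statement3
    (N : ℕ) (hN : 1 ≤ N)
    (Ω0 : Type) (Ωp : Fin N → Type) (A : Fin N → Type)
    [Fintype Ω0] [Nonempty Ω0]
    [∀ i, Fintype (Ωp i)] [∀ i, Nonempty (Ωp i)] [∀ i, DecidableEq (Ωp i)]
    [∀ i, Fintype (A i)] [∀ i, Nonempty (A i)] [∀ i, DecidableEq (A i)]
    (π : Ω0 × (∀ j, Ωp j) → ℝ)
    (hπ0 : ∀ ω, 0 ≤ π ω) (hπ1 : ∑ ω : Ω0 × (∀ j, Ωp j), π ω = 1)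
    (U : ∀ _ : Fin N, (∀ j, A j) → Ω0 × (∀ j, Ωp j) → ℝ)
    (umax : Fin N → ℝ) (humax : ∀ i, 0 ≤ umax i)
    (hU : ∀ i α ω, U i α ω ∈ Set.Icc 0 (umax i))
    (Pr : (∀ j, Ωp j → A j) → ℝ)
    (hPr0 : ∀ s, 0 ≤ Pr s) (hPr1 : ∑ s : ∀ j, Ωp j → A j, Pr s = 1)
    (P : Ω0 × (∀ j, Ωp j) → (∀ j, A j) → ℝ)
    (hgen : ∀ ω α, P ω α =
      ∑ s : ∀ j, Ωp j → A j, Pr s * (if (fun j => s j (ω.2 j)) = α then 1 else 0)) :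
    -- virtual CCE constraints for `Pr`
    (∀ (i : Fin N) (r : Ωp i → A i),
      ∑ s : ∀ j, Ωp j → A j, Pr s *
        (∑ ω : Ω0 × (∀ j, Ωp j), π ω * U i (fun j => s j (ω.2 j)) ω) ≥
      ∑ s : ∀ j, Ωp j → A j, Pr s *
        (∑ ω : Ω0 × (∀ j, Ωp j),
          π ω * U i (fun j => (Function.update s i r) j (ω.2 j)) ω))
    ↔
    -- `P` is a CCE for the stochastic game
    (∃ θ : ∀ i : Fin N, Ωp i → ℝ,
      (∀ i v, θ i v ∈ Set.Icc 0 (umax i)) ∧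
      (∀ i : Fin N,
        ∑ ω : Ω0 × (∀ j, Ωp j), ∑ α : ∀ j, A j, π ω * P ω α * U i α ω ≥
        ∑ ω : Ω0 × (∀ j, Ωp j), ∑ α : ∀ j, A j, π ω * P ω α * θ i (ω.2 i)) ∧
      (∀ (i : Fin N) (v : Ωp i) (β : A i),
        ∑ ω ∈ Finset.univ.filter (fun ω : Ω0 × (∀ j, Ωp j) => ω.2 i = v),
          ∑ α : ∀ j, A j, π ω * P ω α * θ i v ≥
        ∑ ω ∈ Finset.univ.filter (fun ω : Ω0 × (∀ j, Ωp j) => ω.2 i = v),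
          ∑ α : ∀ j, A j, π ω * P ω α * U i (Function.update α i β) ω)) := by
  have key : ∀ (ω : Ω0 × (∀ j, Ωp j)) (f : (∀ j, A j) → ℝ),
      ∑ α : ∀ j, A j, π ω * P ω α * f α =
        ∑ s : ∀ j, Ωp j → A j, Pr s * (π ω * f (fun j => s j (ω.2 j))) := by
    intro ω f
    simp only [hgen, Finset.mul_sum, Finset.sum_mul]
    rw [Finset.sum_comm]
    refine Finset.sum_congr rfl fun s _ => ?_
    rw [Finset.sum_eq_single (fun j => s j (ω.2 j))]
    · simp only [if_true]; ring
    · intro α _ hα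
      rw [if_neg (Ne.symm hα)]; ring
    · intro h; exact absurd (Finset.mem_univ _) h
  have hL : ∀ i : Fin N, ∑ s : ∀ j, Ωp j → A j, Pr s *
        (∑ ω : Ω0 × (∀ j, Ωp j), π ω * U i (fun j => s j (ω.2 j)) ω) =
      ∑ ω : Ω0 × (∀ j, Ωp j), ∑ α : ∀ j, A j, π ω * P ω α * U i α ω := by
    intro i
    simp only [Finset.mul_sum]
    rw [Finset.sum_comm]
    exact Finset.sum_congr rfl fun ω _ => (key ω (fun α => U i α ω)).symm
  have hc : ∀ (ω : Ω0 × (∀ j, Ωp j)) (c : ℝ),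
      ∑ α : ∀ j, A j, π ω * P ω α * c = π ω * c := by
    intro ω c
    rw [key ω (fun _ => c), ← Finset.sum_mul, hPr1, one_mul]
  have hfib : ∀ (i : Fin N) (f : Ω0 × (∀ j, Ωp j) → ℝ),
      ∑ v : Ωp i, ∑ ω ∈ Finset.univ.filter (fun ω : Ω0 × (∀ j, Ωp j) => ω.2 i = v), f ω
        = ∑ ω, f ω := by
    intro i f
    exact Finset.sum_fiberwise Finset.univ (fun ω : Ω0 × (∀ j, Ωp j) => ω.2 i) f
  obtain ⟨D, hD⟩ : ∃ D : ∀ i : Fin N, Ωp i → A i → ℝ, ∀ i v β, D i v β =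
        ∑ ω ∈ Finset.univ.filter (fun ω : Ω0 × (∀ j, Ωp j) => ω.2 i = v),
          ∑ α : ∀ j, A j, π ω * P ω α * U i (Function.update α i β) ω :=
    ⟨_, fun _ _ _ => rfl⟩
  obtain ⟨q, hq⟩ : ∃ q : ∀ i : Fin N, Ωp i → ℝ, ∀ i v, q i v =
        ∑ ω ∈ Finset.univ.filter (fun ω : Ω0 × (∀ j, Ωp j) => ω.2 i = v), π ω :=
    ⟨_, fun _ _ => rfl⟩
  have hR : ∀ (i : Fin N) (r : Ωp i → A i), ∑ s : ∀ j, Ωp j → A j, Pr s *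
        (∑ ω : Ω0 × (∀ j, Ωp j),
          π ω * U i (fun j => (Function.update s i r) j (ω.2 j)) ω) =
      ∑ v, D i v (r v) := by
    intro i r
    have e : ∀ (s : ∀ j, Ωp j → A j) (ω : Ω0 × (∀ j, Ωp j)),
        (fun j => (Function.update s i r) j (ω.2 j)) =
          Function.update (fun j => s j (ω.2 j)) i (r (ω.2 i)) := by
      intro s ω
      funext j
      by_cases h : j = i
      · subst h; simp
      · simp [Function.update_of_ne h]
    simp only [e, Finset.mul_sum]
    rw [Finset.sum_comm, ← hfib i]
    refine Finset.sum_congr rfl fun v _ => ?_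
    rw [hD]
    refine Finset.sum_congr rfl fun ω hω => ?_
    have hv : ω.2 i = v := (Finset.mem_filter.mp hω).2
    rw [hv]
    exact (key ω (fun α => U i (Function.update α i (r v)) ω)).symm
  have hP0 : ∀ ω α, 0 ≤ P ω α := by
    intro ω α
    rw [hgen]
    refine Finset.sum_nonneg fun s _ => mul_nonneg (hPr0 s) ?_
    split_ifs <;> norm_num
  have hq0 : ∀ i v, 0 ≤ q i v := fun i v => by
    rw [hq]; exact Finset.sum_nonneg fun ω _ => hπ0 ω
  have hD0 : ∀ i v β, 0 ≤ D i v β := fun i v β => by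
    rw [hD]
    exact Finset.sum_nonneg fun ω _ => Finset.sum_nonneg fun α _ =>
      mul_nonneg (mul_nonneg (hπ0 ω) (hP0 ω α)) (hU i _ ω).1
  have hD1 : ∀ i v β, D i v β ≤ q i v * umax i := fun i v β => by
    rw [hD, hq, Finset.sum_mul]
    refine Finset.sum_le_sum fun ω _ => ?_
    rw [← hc]
    exact Finset.sum_le_sum fun α _ =>
      mul_le_mul_of_nonneg_left (hU i _ ω).2 (mul_nonneg (hπ0 ω) (hP0 ω α))
  have hT : ∀ (i : Fin N) (t : Ωp i → ℝ),
      ∑ ω : Ω0 × (∀ j, Ωp j), ∑ α : ∀ j, A j, π ω * P ω α * t (ω.2 i) =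
        ∑ v, q i v * t v := by
    intro i t
    rw [← hfib i]
    refine Finset.sum_congr rfl fun v _ => ?_
    rw [hq, Finset.sum_mul]
    refine Finset.sum_congr rfl fun ω hω => ?_
    have hv : ω.2 i = v := (Finset.mem_filter.mp hω).2
    rw [hv, hc]
  have hTv : ∀ (i : Fin N) (v : Ωp i) (c : ℝ),
      ∑ ω ∈ Finset.univ.filter (fun ω : Ω0 × (∀ j, Ωp j) => ω.2 i = v),
          ∑ α : ∀ j, A j, π ω * P ω α * c = q i v * c := by
    intro i v c
    rw [hq, Finset.sum_mul]
    exact Finset.sum_congr rfl fun ω _ => hc ω c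
  simp only [hL, hR, hT, hTv, ← hD]
  constructor
  · intro h
    have hmax : ∀ (i : Fin N) (v : Ωp i), ∃ b, ∀ β, D i v β ≤ D i v b := fun i v =>
      Finite.exists_max (D i v)
    choose r hr using hmax
    have hqθ : ∀ i v, q i v * (D i v (r i v) / q i v) = D i v (r i v) := by
      intro i v
      by_cases h0 : q i v = 0
      · have h1 := hD0 i v (r i v)
        have h2 := hD1 i v (r i v)
        rw [h0, zero_mul] at h2
        rw [h0, zero_mul]; linarith
      · field_simp
    refine ⟨fun i v => D i v (r i v) / q i v, ?_, ?_, ?_⟩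
    · intro i v
      refine ⟨div_nonneg (hD0 _ _ _) (hq0 _ _), ?_⟩
      exact div_le_of_le_mul₀ (hq0 _ _) (humax i) (by rw [mul_comm]; exact hD1 _ _ _)
    · intro i
      simp only [hqθ]
      exact h i (r i)
    · intro i v β
      simp only [hqθ]
      exact hr i v β
  · rintro ⟨θ, -, h1, h2⟩ i r
    have h1' := h1 i
    exact le_trans (Finset.sum_le_sum fun v _ => h2 i v (r v)) h1'
end

section
/- Let Pr be a pmf on S that is a NE for the virtual static game, and let P be the conditional pmf generated by Pr. Then P is a NE for the stochastic game. -/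
open Finset

/-- If `Pr` is a NE for the virtual static game (product form over pmfs
`g i` on pure strategies, plus the virtual CCE constraints), then the generated
conditional pmf `P` is a NE for the stochastic game (product form plus the stochastic
CCE constraints). -/
theorem statement5
    (N : ℕ) (hN : 1 ≤ N)
    (Ω0 : Type) (Ωp : Fin N → Type) (A : Fin N → Type)
    [Fintype Ω0] [Nonempty Ω0]
    [∀ i, Fintype (Ωp i)] [∀ i, Nonempty (Ωp i)] [∀ i, DecidableEq (Ωp i)]
    [∀ i, Fintype (A i)] [∀ i, Nonempty (A i)] [∀ i, DecidableEq (A i)]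
    (π : Ω0 × (∀ j, Ωp j) → ℝ)
    (hπ0 : ∀ ω, 0 ≤ π ω) (hπ1 : ∑ ω : Ω0 × (∀ j, Ωp j), π ω = 1)
    (U : ∀ _ : Fin N, (∀ j, A j) → Ω0 × (∀ j, Ωp j) → ℝ)
    (umax : Fin N → ℝ) (humax : ∀ i, 0 ≤ umax i)
    (hU : ∀ i α ω, U i α ω ∈ Set.Icc 0 (umax i))
    (Pr : (∀ j, Ωp j → A j) → ℝ)
    (hPr0 : ∀ s, 0 ≤ Pr s) (hPr1 : ∑ s : ∀ j, Ωp j → A j, Pr s = 1)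
    -- product form of `Pr`
    (g : ∀ i : Fin N, (Ωp i → A i) → ℝ)
    (hg0 : ∀ i s, 0 ≤ g i s)
    (hg1 : ∀ i, ∑ s : Ωp i → A i, g i s = 1)
    (hPrform : ∀ s, Pr s = ∏ i, g i (s i))
    -- virtual CCE constraints for `Pr`
    (hvirt : ∀ (i : Fin N) (r : Ωp i → A i),
      ∑ s : ∀ j, Ωp j → A j, Pr s *
        (∑ ω : Ω0 × (∀ j, Ωp j), π ω * U i (fun j => s j (ω.2 j)) ω) ≥
      ∑ s : ∀ j, Ωp j → A j, Pr s *
        (∑ ω : Ω0 × (∀ j, Ωp j),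
          π ω * U i (fun j => (Function.update s i r) j (ω.2 j)) ω))
    (P : Ω0 × (∀ j, Ωp j) → (∀ j, A j) → ℝ)
    (hgen : ∀ ω α, P ω α =
      ∑ s : ∀ j, Ωp j → A j, Pr s * (if (fun j => s j (ω.2 j)) = α then 1 else 0)) :
    -- `P` is a NE for the stochastic game: product form ...
    (∃ Pc : ∀ i : Fin N, Ωp i → A i → ℝ,
      (∀ i v a, 0 ≤ Pc i v a) ∧ (∀ i v, ∑ a : A i, Pc i v a = 1) ∧
      (∀ (ω : Ω0 × (∀ j, Ωp j)) (α : ∀ j, A j), P ω α = ∏ i, Pc i (ω.2 i) (α i)))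
    ∧
    -- ... together with the stochastic CCE constraints
    (∃ θ : ∀ i : Fin N, Ωp i → ℝ,
      (∀ i v, θ i v ∈ Set.Icc 0 (umax i)) ∧
      (∀ i : Fin N,
        ∑ ω : Ω0 × (∀ j, Ωp j), ∑ α : ∀ j, A j, π ω * P ω α * U i α ω ≥
        ∑ ω : Ω0 × (∀ j, Ωp j), ∑ α : ∀ j, A j, π ω * P ω α * θ i (ω.2 i)) ∧
      (∀ (i : Fin N) (v : Ωp i) (β : A i),
        ∑ ω ∈ Finset.univ.filter (fun ω : Ω0 × (∀ j, Ωp j) => ω.2 i = v),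
          ∑ α : ∀ j, A j, π ω * P ω α * θ i v ≥
        ∑ ω ∈ Finset.univ.filter (fun ω : Ω0 × (∀ j, Ωp j) => ω.2 i = v),
          ∑ α : ∀ j, A j, π ω * P ω α * U i (Function.update α i β) ω)) := by
  classical
  have key : ∀ (ω : Ω0 × (∀ j, Ωp j)) (f : (∀ j, A j) → ℝ),
      ∑ α : ∀ j, A j, π ω * P ω α * f α
        = π ω * ∑ s : ∀ j, Ωp j → A j, Pr s * f (fun j => s j (ω.2 j)) := by
    intro ω f
    simp_rw [hgen, mul_assoc, ← Finset.mul_sum, Finset.sum_mul]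
    rw [Finset.sum_comm]
    congr 1
    refine Finset.sum_congr rfl fun s _ => ?_
    simp
  refine ⟨⟨fun i v a => ∑ t : Ωp i → A i, g i t * (if t v = a then 1 else 0), ?_, ?_, ?_⟩, ?_⟩
  · intro i v a
    refine Finset.sum_nonneg fun t _ => mul_nonneg (hg0 i t) ?_
    split_ifs <;> norm_num
  · intro i v
    rw [Finset.sum_comm]
    simp [hg1]
  · intro ω α
    rw [hgen, Finset.prod_univ_sum, Fintype.piFinset_univ]
    refine Finset.sum_congr rfl fun s _ => ?_
    rw [Finset.prod_mul_distrib, ← hPrform]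
    congr 1
    by_cases h : (fun j => s j (ω.2 j)) = α
    · subst h
      simp
    · rw [if_neg h]
      obtain ⟨j, hj⟩ := Function.ne_iff.mp h
      exact (Finset.prod_eq_zero (Finset.mem_univ j) (if_neg hj)).symm
  -- averaged utility
  let W : ∀ i : Fin N, A i → Ω0 × (∀ j, Ωp j) → ℝ := fun i β ω =>
    ∑ s : ∀ j, Ωp j → A j, Pr s * U i (Function.update (fun j => s j (ω.2 j)) i β) ω
  have hW0 : ∀ i β ω, 0 ≤ W i β ω := fun i β ω =>
    Finset.sum_nonneg fun s _ => mul_nonneg (hPr0 s) (hU _ _ _).1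
  have hW1 : ∀ i β ω, W i β ω ≤ umax i := fun i β ω => by
    calc W i β ω ≤ ∑ s : ∀ j, Ωp j → A j, Pr s * umax i :=
          Finset.sum_le_sum fun s _ => mul_le_mul_of_nonneg_left (hU _ _ _).2 (hPr0 s)
      _ = umax i := by rw [← Finset.sum_mul, hPr1, one_mul]
  let F : ∀ i : Fin N, Ωp i → Finset (Ω0 × (∀ j, Ωp j)) := fun i v =>
    Finset.univ.filter (fun ω => ω.2 i = v)
  let D : ∀ i : Fin N, Ωp i → A i → ℝ := fun i v β => ∑ ω ∈ F i v, π ω * W i β ω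
  let p : ∀ i : Fin N, Ωp i → ℝ := fun i v => ∑ ω ∈ F i v, π ω
  have hp0 : ∀ i v, 0 ≤ p i v := fun i v => Finset.sum_nonneg fun ω _ => hπ0 ω
  have hD0 : ∀ i v β, 0 ≤ D i v β := fun i v β =>
    Finset.sum_nonneg fun ω _ => mul_nonneg (hπ0 ω) (hW0 _ _ _)
  have hD1 : ∀ i v β, D i v β ≤ umax i * p i v := fun i v β => by
    simp only [D, p]
    rw [Finset.mul_sum]
    refine Finset.sum_le_sum fun ω _ => ?_
    rw [mul_comm (umax i)]
    exact mul_le_mul_of_nonneg_left (hW1 _ _ _) (hπ0 ω)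
  have hmax : ∀ i v, ∃ β, ∀ β', D i v β' ≤ D i v β := fun i v => Finite.exists_max (D i v)
  choose r hr using hmax
  have hpθ : ∀ i v, p i v * (D i v (r i v) / p i v) = D i v (r i v) := by
    intro i v
    by_cases h : p i v = 0
    · have h1 := hD1 i v (r i v)
      have h0 := hD0 i v (r i v)
      rw [h] at h1 ⊢
      linarith
    · field_simp
  refine ⟨fun i v => D i v (r i v) / p i v, ?_, ?_, ?_⟩
  · intro i v
    refine ⟨div_nonneg (hD0 _ _ _) (hp0 _ _), ?_⟩
    exact div_le_of_le_mul₀ (hp0 _ _) (humax i) (hD1 _ _ _)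
  · intro i
    have hv := hvirt i (r i)
    have e1 : ∑ ω : Ω0 × (∀ j, Ωp j), ∑ α : ∀ j, A j, π ω * P ω α * U i α ω =
        ∑ s : ∀ j, Ωp j → A j, Pr s *
        (∑ ω : Ω0 × (∀ j, Ωp j), π ω * U i (fun j => s j (ω.2 j)) ω) := by
      simp_rw [fun ω => key ω (fun α => U i α ω), Finset.mul_sum]
      rw [Finset.sum_comm]
      refine Finset.sum_congr rfl fun s _ => Finset.sum_congr rfl fun ω _ => by ring
    have e2 : ∑ ω : Ω0 × (∀ j, Ωp j), ∑ α : ∀ j, A j,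
          π ω * P ω α * (D i (ω.2 i) (r i (ω.2 i)) / p i (ω.2 i)) =
        ∑ v, D i v (r i v) := by
      rw [← Finset.sum_fiberwise Finset.univ (fun ω : Ω0 × (∀ j, Ωp j) => ω.2 i)]
      refine Finset.sum_congr rfl fun v _ => ?_
      rw [← hpθ i v]
      simp only [p]
      rw [Finset.sum_mul]
      refine Finset.sum_congr rfl fun ω hω => ?_
      rw [key ω (fun _ => D i (ω.2 i) (r i (ω.2 i)) / p i (ω.2 i)), ← Finset.sum_mul, hPr1,
        one_mul, (Finset.mem_filter.mp hω).2]
    have e3 : ∑ v, D i v (r i v) = ∑ s : ∀ j, Ωp j → A j, Pr s *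
        (∑ ω : Ω0 × (∀ j, Ωp j),
          π ω * U i (fun j => (Function.update s i (r i)) j (ω.2 j)) ω) := by
      have : ∑ v, D i v (r i v) = ∑ ω : Ω0 × (∀ j, Ωp j), π ω * W i (r i (ω.2 i)) ω := by
        rw [← Finset.sum_fiberwise Finset.univ (fun ω : Ω0 × (∀ j, Ωp j) => ω.2 i)]
        refine Finset.sum_congr rfl fun v _ => Finset.sum_congr rfl fun ω hω => ?_
        rw [(Finset.mem_filter.mp hω).2]
      rw [this]
      simp only [W, Finset.mul_sum]
      rw [Finset.sum_comm]
      refine Finset.sum_congr rfl fun s _ => Finset.sum_congr rfl fun ω _ => ?_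
      have hb : (fun j => (Function.update s i (r i)) j (ω.2 j)) =
          Function.update (fun j => s j (ω.2 j)) i (r i (ω.2 i)) := by
        funext j
        by_cases h : j = i
        · subst h
          simp
        · simp [h]
      rw [hb]
      ring
    rw [e1]
    refine le_trans (le_of_eq ?_) hv
    rw [← e3, ← e2]
  · intro i v β
    have e1 : ∑ ω ∈ Finset.univ.filter (fun ω : Ω0 × (∀ j, Ωp j) => ω.2 i = v),
          ∑ α : ∀ j, A j, π ω * P ω α * (D i v (r i v) / p i v) = D i v (r i v) := by
      refine Eq.trans ?_ (hpθ i v)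
      generalize D i v (r i v) / p i v = c
      simp only [p]
      rw [Finset.sum_mul]
      refine Finset.sum_congr rfl fun ω hω => ?_
      rw [key ω (fun _ => c), ← Finset.sum_mul, hPr1, one_mul]
    have e2 : ∑ ω ∈ Finset.univ.filter (fun ω : Ω0 × (∀ j, Ωp j) => ω.2 i = v),
          ∑ α : ∀ j, A j, π ω * P ω α * U i (Function.update α i β) ω = D i v β :=
      Finset.sum_congr rfl fun ω _ => key ω (fun α => U i (Function.update α i β) ω)
    rw [e2]
    refine le_trans (hr i v β) (le_of_eq ?_)
    rw [← e1]
end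

section
/- For every stochastic game (with N ≥ 1 players, finite nonempty alphabets and action sets, pmf π, and bounded nonnegative utilities), there exists a conditional probability mass function P that is a NE for the stochastic game. In particular, the set of NE for the stochastic game is nonempty. -/
open Finset

def SDom {X I : Type} (v : I → X → ℤ) (S : Finset X) : Prop :=
  ∀ y, ∃ i, ∀ x ∈ S, v i y ≤ v i x

def SY {X I : Type} (v : I → X → ℤ) (E : Finset X) (i : I) (y : X) : Prop :=
  ∀ l, l ≠ i → ∃ x ∈ E, v l x < v l y

def SR {X I : Type} (v : I → X → ℤ) (E : Finset X) (i : I) (y : X) : Prop :=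
  SY v E i y ∧ ∀ z, SY v E i z → v i z ≤ v i y

theorem SDom.mono {X I : Type} {v : I → X → ℤ} {S E : Finset X} (h : SDom v S) (hE : E ⊆ S) :
    SDom v E := fun y => by
  obtain ⟨i, hi⟩ := h y
  exact ⟨i, fun x hx => hi x (hE hx)⟩

/-- witnesses in a room are bijective -/
theorem room_witness {X I : Type} [Fintype I] [DecidableEq X] {v : I → X → ℤ}
    (hv : ∀ i, Function.Injective (v i)) {S : Finset X} (h : SDom v S)
    (hc : S.card = Fintype.card I) :
    ∃ g : I → X, Function.Injective g ∧ (∀ i, g i ∈ S ∧ ∀ x ∈ S, v i (g i) ≤ v i x) ∧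
      ∀ x ∈ S, ∃ i, g i = x := by
  choose w hw using h
  have hinj : Function.Injective (fun x : S => w x.1) := by
    intro x y hxy
    have h1 := hw x.1 y.1 y.2
    have h2 := hw y.1 x.1 x.2
    simp only at hxy
    rw [hxy] at h1
    exact Subtype.ext (hv _ (le_antisymm h1 h2))
  have hbij : Function.Bijective (fun x : S => w x.1) := by
    rw [Fintype.bijective_iff_injective_and_card]
    exact ⟨hinj, by simpa using hc⟩
  let e := Equiv.ofBijective _ hbij
  have he : ∀ i, w (e.symm i).1 = i := fun i => e.apply_symm_apply i
  refine ⟨fun i => (e.symm i).1, ?_, ?_, ?_⟩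
  · intro i j hij
    exact e.symm.injective (Subtype.ext hij)
  · intro i
    refine ⟨(e.symm i).2, fun x hx => ?_⟩
    have := hw (e.symm i).1 x hx
    rwa [he] at this
  · intro x hx
    exact ⟨e ⟨x, hx⟩, by simp⟩

theorem door_pair {X I : Type} [Fintype I] [DecidableEq X] {v : I → X → ℤ}
    (hv : ∀ i, Function.Injective (v i)) {E : Finset X} (h : SDom v E) (hne : E.Nonempty)
    (hc : E.card + 1 = Fintype.card I) :
    ∃ (i i' : I) (p : X), i ≠ i' ∧ p ∈ E ∧ (∀ x ∈ E, v i p ≤ v i x) ∧ (∀ x ∈ E, v i' p ≤ v i' x) ∧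
      ∀ y, (y ∉ E ∧ SDom v (insert y E)) ↔ (SR v E i y ∨ SR v E i' y) := by
  have ha : ∀ i, ∃ a ∈ E, ∀ x ∈ E, v i a ≤ v i x := fun i => E.exists_min_image (v i) hne
  choose a haE ha using ha
  have hsurj : ∀ x ∈ E, ∃ i, a i = x := by
    intro x hx
    obtain ⟨i, hi⟩ := h x
    exact ⟨i, hv i (le_antisymm (ha i x hx) (hi _ (haE i)))⟩
  obtain ⟨i, -, i', -, hii, haa⟩ := Finset.exists_ne_map_eq_of_card_lt_of_maps_to
    (s := (univ : Finset I)) (t := E) (by rw [card_univ]; omega) (f := a)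
    (fun i _ => haE i)
  have back : ∀ i i', i ≠ i' → a i = a i' → ∀ y, SR v E i y → (y ∉ E ∧ SDom v (insert y E)) := by
    intro i i' hii haa y ⟨h1, h2⟩
    constructor
    · intro hy
      obtain ⟨j, hj⟩ := hsurj y hy
      by_cases hji : j = i
      · subst hji
        obtain ⟨x, hx, hlt⟩ := h1 i' (Ne.symm hii)
        have := ha i' x hx
        rw [← haa, hj] at this
        omega
      · obtain ⟨x, hx, hlt⟩ := h1 j hji
        have := ha j x hx
        rw [hj] at this
        omega
    · intro z
      by_cases hz : SY v E i z
      · refine ⟨i, fun x hx => ?_⟩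
        rcases mem_insert.1 hx with rfl | hx
        · exact h2 z hz
        · refine (h2 z hz).trans ?_
          obtain ⟨t, ht⟩ := h y
          by_cases hti : t = i
          · subst hti; exact ht x hx
          · obtain ⟨x', hx', hlt⟩ := h1 t hti
            have := ht x' hx'
            omega
      · unfold SY at hz
        push Not at hz
        obtain ⟨l, hl, hz⟩ := hz
        refine ⟨l, fun x hx => ?_⟩
        rcases mem_insert.1 hx with rfl | hx
        · obtain ⟨x', hx', hlt⟩ := h1 l hl
          have := hz x' hx'
          omega
        · exact hz x hx
  refine ⟨i, i', a i, hii, haE i, ha i, by rw [haa]; exact ha i', fun y => ⟨?_, ?_⟩⟩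
  · rintro ⟨hy, hD⟩
    obtain ⟨g, ginj, hg, gs⟩ := room_witness hv hD (by rw [card_insert_of_notMem hy]; exact hc)
    obtain ⟨k, hk⟩ := gs y (mem_insert_self _ _)
    have hE : ∀ l, l ≠ k → g l ∈ E := by
      intro l hl
      rcases mem_insert.1 (hg l).1 with h | h
      · exact absurd (ginj (h.trans hk.symm)) hl
      · exact h
    have hR : SR v E k y := by
      constructor
      · intro l hl
        refine ⟨g l, hE l hl, lt_of_le_of_ne ((hg l).2 y (mem_insert_self _ _)) ?_⟩
        intro h
        exact hl (ginj ((hv l h).trans hk.symm))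
      · intro z hz
        obtain ⟨t, ht⟩ := hD z
        by_cases htk : t = k
        · subst htk; exact ht y (mem_insert_self _ _)
        · obtain ⟨x, hx, hlt⟩ := hz t htk
          have := ht x (mem_insert_of_mem hx)
          omega
    have hga : ∀ l, l ≠ k → g l = a l := fun l hl =>
      hv l (le_antisymm ((hg l).2 _ (mem_insert_of_mem (haE l))) (ha l _ (hE l hl)))
    by_cases h1 : i = k
    · subst h1; exact Or.inl hR
    by_cases h2 : i' = k
    · subst h2; exact Or.inr hR
    exact absurd (ginj ((hga i h1).trans (haa.trans (hga i' h2).symm))) hii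
  · rintro (hR | hR)
    · exact back i i' hii haa y hR
    · exact back i' i hii.symm haa.symm y hR

theorem SR_exists {X I : Type} [Fintype X] {v : I → X → ℤ} {E : Finset X} {i : I}
    (h : ∃ y, SY v E i y) : ∃ y, SR v E i y := by
  classical
  obtain ⟨y, hy⟩ := h
  obtain ⟨z, hz, hm⟩ := (univ.filter (SY v E i)).exists_max_image (v i) ⟨y, by simpa using hy⟩
  exact ⟨z, by simpa using hz, fun t ht => hm t (by simpa using ht)⟩

theorem SR_unique {X I : Type} {v : I → X → ℤ} (hv : ∀ i, Function.Injective (v i))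
    {E : Finset X} {i : I} {y z : X} (hy : SR v E i y) (hz : SR v E i z) : y = z :=
  hv i (le_antisymm (hz.2 _ hy.1) (hy.2 _ hz.1))

theorem SR_disj {X I : Type} {v : I → X → ℤ} {E : Finset X} (h : SDom v E) {i i' : I}
    (hii : i ≠ i') {y : X} (hy : SR v E i y) (hz : SR v E i' y) : False := by
  obtain ⟨t, ht⟩ := h y
  by_cases hti : t = i
  · subst hti
    obtain ⟨x, hx, hlt⟩ := hz.1 t hii
    have := ht x hx
    omega
  · obtain ⟨x, hx, hlt⟩ := hy.1 t hti
    have := ht x hx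
    omega

open Classical in
theorem door_two {X I : Type} [Fintype X] [Fintype I] {v : I → X → ℤ}
    (hv : ∀ i, Function.Injective (v i)) {E : Finset X} (h : SDom v E) (hne : E.Nonempty)
    (hc : E.card + 1 = Fintype.card I) (hY : ∀ i, ∃ y, SY v E i y) :
    (univ.filter (fun y => y ∉ E ∧ SDom v (insert y E))).card = 2 := by
  obtain ⟨i, i', p, hii, -, -, -, hiff⟩ := door_pair hv h hne hc
  obtain ⟨y, hy⟩ := SR_exists (hY i)
  obtain ⟨y', hy'⟩ := SR_exists (hY i')
  rw [Finset.card_eq_two]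
  refine ⟨y, y', ?_, ?_⟩
  · rintro rfl
    exact SR_disj h hii hy hy'
  · ext z
    simp only [mem_filter, mem_univ, true_and, hiff, mem_insert, mem_singleton]
    constructor
    · rintro (h | h)
      · exact Or.inl (SR_unique hv h hy)
      · exact Or.inr (SR_unique hv h hy')
    · rintro (rfl | rfl)
      · exact Or.inl hy
      · exact Or.inr hy'

open Classical in
theorem door_one {X I : Type} [Fintype X] [Fintype I] [Nontrivial I] {v : I → X → ℤ}
    (hv : ∀ i, Function.Injective (v i)) (s : I → X) (hs : Function.Injective s)
    (hs1 : ∀ i x, v i (s i) ≤ v i x)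
    (hs2 : ∀ x, x ∉ Set.range s → ∀ i j, i ≠ j → v j x < v j (s i))
    (t0 : X) (ht0 : t0 ∉ Set.range s) (i0 : I) :
    SDom v ((univ.erase i0).image s) ∧
    (univ.filter (fun y => y ∉ (univ.erase i0).image s ∧
      SDom v (insert y ((univ.erase i0).image s)))).card = 1 := by
  have hD : SDom v ((univ.erase i0).image s) := by
    intro y
    by_cases hy : y ∈ Set.range s
    · obtain ⟨i, rfl⟩ := hy
      exact ⟨i, fun x _ => hs1 i x⟩
    · refine ⟨i0, fun x hx => ?_⟩
      obtain ⟨j, hj, rfl⟩ := mem_image.1 hx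
      exact (hs2 y hy j i0 (by simpa using hj)).le
  refine ⟨hD, ?_⟩
  set E := (univ.erase i0).image s with hE
  have hmem : ∀ l, l ≠ i0 → s l ∈ E := fun l hl => mem_image_of_mem _ (by simpa using hl)
  have hcard : E.card + 1 = Fintype.card I := by
    rw [hE, card_image_of_injective _ hs, card_erase_of_mem (mem_univ _), card_univ]
    have := Fintype.card_pos (α := I) 
    omega
  have hne : E.Nonempty := by
    obtain ⟨j, hj⟩ := exists_ne i0
    exact ⟨_, hmem j hj⟩
  obtain ⟨i, i', p, hii, hp, hpi, hpi', hiff⟩ := door_pair hv hD hne hcard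
  have key : ∀ k, k ≠ i0 → (∀ x ∈ E, v k p ≤ v k x) → (∀ x ∈ E, v i0 p ≤ v i0 x) → ∀ y, 
      ¬ SR v E k y := by
    intro k hk hpk hp0 y hy
    have hpk' : p = s k := hv k (le_antisymm (hpk _ (hmem k hk)) (hs1 _ _))
    obtain ⟨x, hx, hlt⟩ := hy.1 i0 hk.symm
    obtain ⟨j, hj, rfl⟩ := mem_image.1 hx
    have hj0 : j ≠ i0 := by simpa using hj
    by_cases hys : y ∈ Set.range s
    · obtain ⟨t, rfl⟩ := hys
      by_cases htk : t = k
      · subst htk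
        have := hp0 _ hx
        rw [hpk'] at this
        omega
      · obtain ⟨x, hx, hlt⟩ := hy.1 t htk
        have := hs1 t x
        omega
    · have := hs2 y hys j i0 hj0
      omega
  have h0 : ∃ y, SR v E i0 y := by
    apply SR_exists
    refine ⟨t0, fun l hl => ⟨s l, hmem l hl, lt_of_le_of_ne (hs1 _ _) ?_⟩⟩
    intro h
    exact ht0 ⟨l, hv l h⟩
  obtain ⟨y0, hy0⟩ := h0
  rw [card_eq_one]
  refine ⟨y0, ?_⟩
  ext z
  simp only [mem_filter, mem_univ, true_and, hiff, mem_singleton]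
  by_cases h1 : i = i0
  · subst h1
    constructor
    · rintro (h | h)
      · exact SR_unique hv h hy0
      · exact absurd h (key i' hii.symm hpi' hpi z)
    · rintro rfl; exact Or.inl hy0
  · by_cases h2 : i' = i0
    · subst h2
      constructor
      · rintro (h | h)
        · exact absurd h (key i hii hpi hpi' z)
        · exact SR_unique hv h hy0
      · rintro rfl; exact Or.inr hy0
    · have e1 : p = s i := hv i (le_antisymm (hpi _ (hmem i h1)) (hs1 _ _))
      have e2 : p = s i' := hv i' (le_antisymm (hpi' _ (hmem i' h2)) (hs1 _ _))
      exact absurd (hs (e1.symm.trans e2)) hii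

/-- parity of typed facets of a non-colourful room -/
theorem facet_even {X I : Type} [Fintype X] [Fintype I] [DecidableEq X] [DecidableEq I]
    (c : X → I) (i0 : I) (S : Finset X)
    (hS : S.card = Fintype.card I) (hnc : S.image c ≠ univ) :
    Even ((S.filter (fun x => (S.erase x).image c = univ.erase i0)).card) := by
  have hcardE : ∀ x ∈ S, (S.erase x).card = (univ.erase i0 : Finset I).card := by
    intro x hx
    rw [card_erase_of_mem hx, card_erase_of_mem (mem_univ _), hS, card_univ]
  rcases (S.filter (fun x => (S.erase x).image c = univ.erase i0)).eq_empty_or_nonempty with h | ⟨x, hx⟩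
  · rw [h]; simp
  · obtain ⟨hxS, hx⟩ := mem_filter.1 hx
    have hinj : ∀ z ∈ S, (S.erase z).image c = univ.erase i0 → Set.InjOn c (S.erase z) := by
      intro z hz h
      apply Finset.card_image_iff.1
      rw [h, hcardE z hz]
    have hc0 : c x ≠ i0 := by
      intro h
      apply hnc
      rw [← insert_erase hxS, image_insert, hx, h, insert_erase (mem_univ _)]
    have : c x ∈ (S.erase x).image c := by rw [hx]; simpa using hc0
    obtain ⟨x', hx', hcx⟩ := mem_image.1 this
    have hx'S := (mem_erase.1 hx').2
    have hne := (mem_erase.1 hx').1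
    have : S.filter (fun x => (S.erase x).image c = univ.erase i0) = {x, x'} := by
      ext z
      simp only [mem_filter, mem_insert, mem_singleton]
      constructor
      · rintro ⟨hz, hzc⟩
        by_contra! hcon
        exact hne (hinj z hz hzc (by simp [hx'S, hcon.2.symm]) (by simp [hxS, hcon.1.symm]) hcx)
      · rintro (rfl | rfl)
        · exact ⟨hxS, hx⟩
        · refine ⟨hx'S, ?_⟩
          rw [← hx]
          ext t
          simp only [mem_image, mem_erase]
          constructor
          · rintro ⟨w, ⟨hw, hwS⟩, rfl⟩
            by_cases hwx : w = x
            · subst hwx; exact ⟨z, ⟨hne, hx'S⟩, hcx⟩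
            · exact ⟨w, ⟨hwx, hwS⟩, rfl⟩
          · rintro ⟨w, ⟨hw, hwS⟩, rfl⟩
            by_cases hwx : w = z
            · subst hwx; exact ⟨x, ⟨hne.symm, hxS⟩, hcx.symm⟩
            · exact ⟨w, ⟨hwx, hwS⟩, rfl⟩
    rw [this, card_pair hne.symm]
    exact even_two

open Classical in
theorem scarf {X I : Type} [Fintype X] [Fintype I] [Nontrivial I] {v : I → X → ℤ}
    (hv : ∀ i, Function.Injective (v i)) (s : I → X) (hs : Function.Injective s)
    (hs1 : ∀ i x, v i (s i) ≤ v i x)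
    (hs2 : ∀ x, x ∉ Set.range s → ∀ i j, i ≠ j → v j x < v j (s i))
    (t0 : X) (ht0 : t0 ∉ Set.range s) (c : X → I) (hc : ∀ i, c (s i) = i) :
    ∃ S : Finset X, SDom v S ∧ S.card = Fintype.card I ∧ S.image c = univ := by
  by_contra! hcon
  obtain ⟨i0⟩ : Nonempty I := inferInstance
  have hcI : 2 ≤ Fintype.card I := Fintype.one_lt_card
  let R : Finset (Finset X) := univ.filter (fun S => S.card = Fintype.card I ∧ SDom v S)
  let D : Finset (Finset X) := univ.filter
    (fun E => E.card + 1 = Fintype.card I ∧ SDom v E ∧ E.image c = univ.erase i0)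
  have hdc := Finset.sum_card_bipartiteAbove_eq_sum_card_bipartiteBelow
    (s := R) (t := D) (fun S E => E ⊆ S)
  have hL : Even (∑ S ∈ R, (D.bipartiteAbove (fun S E => E ⊆ S) S).card) := by
    apply Finset.even_sum
    intro S hS
    obtain ⟨hSc, hSD⟩ := (mem_filter.1 hS).2
    have := facet_even c i0 S hSc (hcon S hSD hSc)
    suffices heq : (S.filter (fun x => (S.erase x).image c = univ.erase i0)).card =
        (D.bipartiteAbove (fun S E => E ⊆ S) S).card by rw [← heq]; exact this
    apply Finset.card_bij (fun x _ => S.erase x)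
    · intro x hx
      obtain ⟨hxS, hx⟩ := mem_filter.1 hx
      simp only [D, mem_bipartiteAbove, mem_filter, mem_univ, true_and]
      refine ⟨⟨?_, hSD.mono (erase_subset _ _), hx⟩, erase_subset _ _⟩
      rw [card_erase_of_mem hxS]; omega
    · intro x hx y hy hxy
      have hxS := (mem_filter.1 hx).1
      by_contra hne
      have : x ∈ S.erase y := by simp [hne, hxS]
      rw [← hxy] at this
      simp at this
    · intro E hE
      simp only [D, mem_bipartiteAbove, mem_filter, mem_univ, true_and] at hE
      obtain ⟨⟨h1, h2, h3⟩, h4⟩ := hE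
      obtain ⟨x, hx, rfl⟩ := (Finset.covBy_iff_exists_insert.1 (Finset.covBy_iff_card_sdiff_eq_one.2
        ⟨h4, by rw [card_sdiff_of_subset h4]; omega⟩))
      refine ⟨x, ?_, by rw [erase_insert hx]⟩
      simp only [mem_filter, mem_insert_self, true_and]
      rw [erase_insert hx, h3]
  have hcnt : ∀ E ∈ D, (R.bipartiteBelow (fun S E => E ⊆ S) E).card =
      (univ.filter (fun y => y ∉ E ∧ SDom v (insert y E))).card := by
    intro E hE
    obtain ⟨h1, h2, h3⟩ := (mem_filter.1 hE).2
    symm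
    apply Finset.card_bij (fun y _ => insert y E)
    · intro y hy
      obtain ⟨hy1, hy2⟩ := (mem_filter.1 hy).2
      simp only [R, mem_bipartiteBelow, mem_filter, mem_univ, true_and]
      exact ⟨⟨by rw [card_insert_of_notMem hy1]; exact h1, hy2⟩, subset_insert _ _⟩
    · intro x hx y hy hxy
      have hx1 := (mem_filter.1 hx).2.1
      have : x ∈ insert y E := by rw [← hxy]; simp
      rcases mem_insert.1 this with h | h
      · exact h
      · exact absurd h hx1
    · intro S hS
      simp only [R, mem_bipartiteBelow, mem_filter, mem_univ, true_and] at hS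
      obtain ⟨⟨h4, h5⟩, h6⟩ := hS
      obtain ⟨x, hx, rfl⟩ := (Finset.covBy_iff_exists_insert.1 (Finset.covBy_iff_card_sdiff_eq_one.2
        ⟨h6, by rw [card_sdiff_of_subset h6]; omega⟩))
      exact ⟨x, by simp [hx, h5], rfl⟩
  obtain ⟨hE0D, hE0⟩ := door_one hv s hs hs1 hs2 t0 ht0 i0
  set E0 := (univ.erase i0).image s with hE0def
  have hE0mem : E0 ∈ D := by
    simp only [D, mem_filter, mem_univ, true_and]
    refine ⟨?_, hE0D, ?_⟩
    · rw [hE0def, card_image_of_injective _ hs, card_erase_of_mem (mem_univ _), card_univ]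
      omega
    · rw [hE0def, image_image]
      have : c ∘ s = id := funext hc
      rw [this, image_id]
  have hrest : Even (∑ E ∈ D.erase E0, (R.bipartiteBelow (fun S E => E ⊆ S) E).card) := by
    apply Finset.even_sum
    intro E hE
    obtain ⟨hne, hED⟩ := mem_erase.1 hE
    rw [hcnt E hED]
    obtain ⟨h1, h2, h3⟩ := (mem_filter.1 hED).2
    have hEne : E.Nonempty := by rw [← card_pos]; omega
    rw [door_two hv h2 hEne h1]
    · exact even_two
    · have : ∃ x ∈ E, x ∉ Set.range s := by
        by_contra! hall
        apply hne
        apply Finset.eq_of_subset_of_card_le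
        · intro x hx
          obtain ⟨i, rfl⟩ := hall x hx
          apply mem_image_of_mem
          rw [← h3]
          exact mem_image.2 ⟨_, hx, hc i⟩
        · have := (mem_filter.1 hE0mem).2.1
          omega
      obtain ⟨x, hx, hxs⟩ := this
      exact fun i => ⟨s i, fun l hl => ⟨x, hx, hs2 x hxs i l hl.symm⟩⟩
  rw [hdc, ← Finset.add_sum_erase _ _ hE0mem, hcnt _ hE0mem, hE0] at hL
  rcases hL with ⟨a, ha⟩
  rcases hrest with ⟨b, hb⟩
  omega

theorem grid_lemma {I : Type} [Fintype I] [Nontrivial I] (m : ℕ) (c : (I → ℕ) → I) :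
    ∃ (C : Finset I) (p : I → I → ℕ), (∀ k ∈ C, ∑ i, p k i = m ∧ c (p k) = k) ∧
      ∀ y : I → ℕ, ∑ i, y i = m → ∃ i ∈ C, ∀ k ∈ C, y i ≤ p k i := by
  classical
  let T := {x : I → Fin (m+1) // ∑ i, (x i : ℕ) = m}
  let X := T ⊕ I
  let M : ℕ := Fintype.card X
  let e : X → ℕ := fun x => (Fintype.equivFin X x : ℕ)
  have heM : ∀ x, e x < M := fun x => (Fintype.equivFin X x).2
  have heinj : Function.Injective e := fun x y h => (Fintype.equivFin X).injective (Fin.ext h)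
  let v : I → X → ℤ := fun i x => Sum.elim (fun t : T => (((t.1 i : ℕ) * M + e (Sum.inl t) : ℕ) : ℤ))
    (fun j => if j = i then -1 else (((m+1) * M + e (Sum.inr j) : ℕ) : ℤ)) x
  have hvl : ∀ i t, v i (Sum.inl t) = (((t.1 i : ℕ) * M + e (Sum.inl t) : ℕ) : ℤ) := fun _ _ => rfl
  have hvr : ∀ i j, v i (Sum.inr j) = if j = i then -1 else (((m+1) * M + e (Sum.inr j) : ℕ) : ℤ) :=
    fun _ _ => rfl
  have hlt : ∀ i (t : T), (t.1 i : ℕ) * M + e (Sum.inl t) < (m+1) * M := by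
    intro i t
    have h1 := heM (Sum.inl t)
    have h2 : (t.1 i : ℕ) + 1 ≤ m + 1 := (t.1 i).2
    have := Nat.mul_le_mul_right M h2
    nlinarith
  have hv : ∀ i, Function.Injective (v i) := by
    intro i x y hxy
    rcases x with x | x <;> rcases y with y | y
    · rw [hvl, hvl] at hxy
      have hxy := Int.natCast_inj.1 hxy
      apply heinj
      have := congrArg (· % M) hxy
      simpa [Nat.mod_eq_of_lt, heM, Nat.mul_add_mod'] using this
    · rw [hvl, hvr] at hxy
      have := hlt i x
      split_ifs at hxy <;> omega
    · rw [hvl, hvr] at hxy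
      have := hlt i y
      split_ifs at hxy <;> omega
    · rw [hvr, hvr] at hxy
      by_cases h1 : x = i
      · by_cases h2 : y = i
        · rw [h1, h2]
        · rw [if_pos h1, if_neg h2] at hxy; omega
      · by_cases h2 : y = i
        · rw [if_neg h1, if_pos h2] at hxy; omega
        · rw [if_neg h1, if_neg h2] at hxy; apply heinj; omega
  have hT : ∀ y : I → ℕ, ∑ i, y i = m → ∃ t : T, ∀ i, (t.1 i : ℕ) = y i := by
    intro y hy
    refine ⟨⟨fun i => ⟨y i, ?_⟩, by simpa using hy⟩, fun i => rfl⟩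
    have := Finset.single_le_sum (f := y) (fun _ _ => Nat.zero_le _) (mem_univ i)
    omega
  obtain ⟨j0⟩ : Nonempty I := inferInstance
  obtain ⟨t0, -⟩ := hT (Pi.single j0 m) (by simp)
  obtain ⟨S, hD, hcard, hcol⟩ := scarf hv (fun i => (Sum.inr i : X)) Sum.inr_injective
    (by
      intro i x
      rw [hvr, if_pos rfl]
      rcases x with x | x
      · rw [hvl]; omega
      · rw [hvr]; split_ifs <;> omega)
    (by
      intro x hx i j hij
      rcases x with x | x
      · rw [hvl, hvr, if_neg hij]
        have := hlt j x
        omega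
      · exact absurd ⟨x, rfl⟩ hx)
    (Sum.inl t0) (by simp)
    (fun x => Sum.elim (fun t : T => c (fun i => (t.1 i : ℕ))) id x) (fun i => rfl)
  have hex : ∀ k, ∃ x ∈ S, Sum.elim (fun t : T => c (fun i => (t.1 i : ℕ))) id x = k := by
    intro k
    have := mem_univ k
    rw [← hcol] at this
    simpa only [mem_image] using this
  have hex2 : ∀ k, ∃ q : I → ℕ, (Sum.inr k : X) ∉ S →
      ∃ t : T, Sum.inl t ∈ S ∧ (fun i => (t.1 i : ℕ)) = q ∧ c q = k := by
    intro k
    obtain ⟨x, hx, hk⟩ := hex k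
    rcases x with t | j
    · exact ⟨_, fun _ => ⟨t, hx, rfl, hk⟩⟩
    · exact ⟨0, fun h => absurd (by simpa [← hk] using hx) h⟩
  choose p hp using hex2
  refine ⟨univ.filter (fun k => (Sum.inr k : X) ∉ S), p, ?_, ?_⟩
  · intro k hk
    obtain ⟨t, h1, h2, h3⟩ := hp k (by simpa using hk)
    exact ⟨by rw [← h2]; exact t.2, h3⟩
  · intro y hy
    obtain ⟨t, ht⟩ := hT y hy
    obtain ⟨i, hi⟩ := hD (Sum.inl t)
    refine ⟨i, ?_, ?_⟩
    · simp only [mem_filter, mem_univ, true_and]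
      intro h
      have := hi _ h
      rw [hvl, hvr, if_pos rfl] at this
      omega
    · intro k hk
      obtain ⟨t', h1, h2, h3⟩ := hp k (by simpa using hk)
      have := hi _ h1
      rw [hvl, hvl] at this
      have h4 := heM (Sum.inl t')
      rw [← h2, ← ht]
      by_contra! hcon
      have := Nat.mul_le_mul_right M (Nat.succ_le_of_lt hcon)
      simp only [Nat.succ_eq_add_one] at this
      have h5 : ((t'.1 i : ℕ) + 1) * M = (t'.1 i : ℕ) * M + M := by ring
      omega

theorem grid_lemma2 {I : Type} [Fintype I] [Nontrivial I] (m : ℕ) (c : (I → ℕ) → I) :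
    ∃ (C : Finset I) (p : I → I → ℕ), C.Nonempty ∧ (∀ k ∈ C, ∑ i, p k i = m ∧ c (p k) = k) ∧
      (∀ k ∈ C, ∀ k' ∈ C, ∀ i, p k i ≤ p k' i + Fintype.card I) ∧
      (∀ k ∈ C, ∀ i, i ∉ C → p k i ≤ Fintype.card I) := by
  classical
  obtain ⟨C, p, h1, h2⟩ := grid_lemma m c
  obtain ⟨j0⟩ : Nonempty I := inferInstance
  have hC : C.Nonempty := by
    obtain ⟨i, hi, -⟩ := h2 (Pi.single j0 m) (by simp)
    exact ⟨i, hi⟩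
  have hl : ∀ i, ∃ k ∈ C, ∀ k' ∈ C, p k i ≤ p k' i := fun i => C.exists_min_image (fun k => p k i) hC
  choose a haC ha using hl
  have hsum : m < ∑ i ∈ C, (p (a i) i + 1) := by
    by_contra! hcon
    obtain ⟨d, hd⟩ := Nat.exists_eq_add_of_le hcon
    obtain ⟨i, hi, hy⟩ := h2 (fun i => (if i ∈ C then p (a i) i + 1 else 0) + Pi.single (M := fun _ => ℕ) j0 d i)
      (by rw [sum_add_distrib, ← sum_filter]; simp [hd])
    have := hy (a i) (haC i)
    simp only [hi, if_true] at this
    omega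
  have hsum2 : m < (∑ i ∈ C, p (a i) i) + Fintype.card I := by
    have := Finset.card_le_univ C
    rw [sum_add_distrib] at hsum
    simp at hsum
    omega
  have hle : ∀ k ∈ C, ∑ i ∈ C, p (a i) i ≤ ∑ i ∈ C, p k i := fun k hk =>
    sum_le_sum fun i _ => ha i k hk
  have hout : ∀ k ∈ C, ∀ i, i ∉ C → p k i ≤ Fintype.card I := by
    intro k hk i hi
    have h3 := (h1 k hk).1
    have h4 : ∑ j ∈ insert i C, p k j ≤ ∑ j, p k j :=
      sum_le_sum_of_subset (subset_univ _)
    rw [sum_insert hi] at h4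
    have := hle k hk
    omega
  refine ⟨C, p, hC, h1, ?_, hout⟩
  intro k hk k' hk' i
  by_cases hi : i ∈ C
  · have h3 := (h1 k hk).1
    have h4 : ∑ j ∈ C, p k j ≤ ∑ j, p k j :=
      sum_le_sum_of_subset (subset_univ _)
    rw [← add_sum_erase _ _ hi] at h4
    rw [← add_sum_erase _ _ hi] at hsum2
    have h5 : ∑ j ∈ C.erase i, p (a j) j ≤ ∑ j ∈ C.erase i, p k j :=
      sum_le_sum fun j _ => ha j k hk
    have := ha i k' hk'
    omega
  · have := hout k hk i hi
    omega

theorem brouwer_approx {I : Type} [Fintype I] [Nontrivial I] (f : (I → ℝ) → (I → ℝ))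
    (hf : ContinuousOn f (stdSimplex ℝ I)) (hmap : ∀ x ∈ stdSimplex ℝ I, f x ∈ stdSimplex ℝ I)
    (ε : ℝ) (hε : 0 < ε) : ∃ x ∈ stdSimplex ℝ I, ∀ i, x i ≤ f x i + ε := by
  classical
  have huc := (isCompact_stdSimplex ℝ I).uniformContinuousOn_of_continuous hf
  rw [Metric.uniformContinuousOn_iff] at huc
  obtain ⟨δ, hδ, huc⟩ := huc (ε/2) (by linarith)
  set n : ℝ := (Fintype.card I : ℝ) with hn
  have hn0 : 0 < n := by rw [hn]; exact_mod_cast Fintype.card_pos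
  obtain ⟨m, hm⟩ := exists_nat_gt (n / min δ (ε/2))
  have hmin : 0 < min δ (ε/2) := lt_min hδ (by linarith)
  have hm0 : (0:ℝ) < m := lt_trans (by positivity) hm
  have hnm : n / m < min δ (ε/2) := by
    rw [div_lt_iff₀ hmin] at hm
    rw [div_lt_iff₀ hm0]; linarith
  have hnm1 := lt_of_lt_of_le hnm (min_le_left _ _)
  have hnm2 := lt_of_lt_of_le hnm (min_le_right _ _)
  let r : (I → ℕ) → (I → ℝ) := fun q i => (q i : ℝ) / m
  have hr : ∀ q : I → ℕ, ∑ i, q i = m → r q ∈ stdSimplex ℝ I := by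
    intro q hq
    refine ⟨fun i => by positivity, ?_⟩
    simp only [r]
    rw [← sum_div, ← Nat.cast_sum, hq, div_self hm0.ne']
  have hcol : ∀ q : I → ℕ, ∃ i, ∑ i, q i = m → r q i ≤ f (r q) i := by
    intro q
    by_cases hq : ∑ i, q i = m
    · by_contra! hcon
      have h1 : ∑ i, f (r q) i < ∑ i, r q i :=
        sum_lt_sum_of_nonempty univ_nonempty fun i _ => (hcon i).2
      rw [(hmap _ (hr q hq)).2, (hr q hq).2] at h1
      exact lt_irrefl _ h1
    · obtain ⟨j0⟩ : Nonempty I := inferInstance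
      exact ⟨j0, fun h => absurd h hq⟩
  choose c hc using hcol
  obtain ⟨C, p, ⟨k, hk⟩, h1, h2, h3⟩ := grid_lemma2 m c
  have hd : ∀ k ∈ C, ∀ k' ∈ C, ∀ i, r (p k) i ≤ r (p k') i + n / m := by
    intro k hk k' hk' i
    simp only [r]
    rw [← add_div]
    apply div_le_div_of_nonneg_right _ hm0.le
    rw [hn]
    exact_mod_cast h2 k hk k' hk' i
  refine ⟨r (p k), hr _ (h1 k hk).1, fun i => ?_⟩
  by_cases hi : i ∈ C
  · have h4 := hc (p i) (h1 i hi).1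
    rw [(h1 i hi).2] at h4
    have h5 : dist (r (p k)) (r (p i)) < δ := by
      refine lt_of_le_of_lt ((dist_pi_le_iff (by positivity)).2 fun j => ?_) hnm1
      rw [Real.dist_eq, abs_le]
      constructor
      · linarith [hd i hi k hk j]
      · linarith [hd k hk i hi j]
    have h6 := lt_of_le_of_lt (dist_le_pi_dist _ _ i) (huc _ (hr _ (h1 k hk).1) _ (hr _ (h1 i hi).1) h5)
    rw [Real.dist_eq, abs_lt] at h6
    linarith [hd k hk i hi i]
  · have h4 : r (p k) i ≤ n / m := by
      apply div_le_div_of_nonneg_right _ hm0.le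
      rw [hn]
      exact_mod_cast h3 k hk i hi
    have h5 := (hmap _ (hr _ (h1 k hk).1)).1 i
    linarith

theorem brouwer_simplex {I : Type} [Fintype I] [Nonempty I] (f : (I → ℝ) → (I → ℝ))
    (hf : ContinuousOn f (stdSimplex ℝ I)) (hmap : ∀ x ∈ stdSimplex ℝ I, f x ∈ stdSimplex ℝ I) :
    ∃ x ∈ stdSimplex ℝ I, f x = x := by
  classical
  obtain ⟨j0⟩ : Nonempty I := inferInstance
  have hfin : ∀ x ∈ stdSimplex ℝ I, (∀ i, x i ≤ f x i) → f x = x := by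
    intro x hx h
    have h1 : ∑ i, (f x i - x i) = 0 := by
      rw [sum_sub_distrib, (hmap x hx).2, hx.2, sub_self]
    have h2 := (sum_eq_zero_iff_of_nonneg (fun i _ => sub_nonneg.2 (h i))).1 h1
    funext i
    linarith [h2 i (mem_univ i)]
  have hne : (stdSimplex ℝ I).Nonempty := ⟨_, single_mem_stdSimplex ℝ j0⟩
  rcases subsingleton_or_nontrivial I with hs | hnt
  · obtain ⟨x, hx⟩ := hne
    refine ⟨x, hx, hfin x hx fun i => ?_⟩
    have h1 := hx.2
    have h2 := (hmap x hx).2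
    rw [Fintype.sum_subsingleton _ i] at h1 h2
    rw [h1, h2]
  · have hcont : ContinuousOn (fun x => ∑ i, max 0 (x i - f x i)) (stdSimplex ℝ I) := by
      apply continuousOn_finsetSum
      intro i _
      refine (continuous_const.max continuous_id : Continuous (fun t : ℝ => max 0 t)).comp_continuousOn ?_
      exact (continuous_apply i).continuousOn.sub ((continuous_apply i).comp_continuousOn hf)
    obtain ⟨x, hx, hmin⟩ := (isCompact_stdSimplex ℝ I).exists_isMinOn hne hcont
    refine ⟨x, hx, hfin x hx fun i => ?_⟩
    by_contra! hcon
    have hn0 : (0:ℝ) < Fintype.card I := by exact_mod_cast Fintype.card_pos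
    have hi : x i - f x i ≤ ∑ i, max 0 (x i - f x i) :=
      (le_max_right _ _).trans
        (single_le_sum (f := fun i => max 0 (x i - f x i)) (fun _ _ => le_max_left _ _) (mem_univ i))
    obtain ⟨y, hy, hya⟩ := brouwer_approx f hf hmap ((x i - f x i) / (2 * Fintype.card I))
      (div_pos (by linarith) (by positivity))
    have h1 := hmin hy
    simp only [Set.mem_ofPred_eq] at h1
    have h2 : ∑ i, max 0 (y i - f y i) ≤ ∑ _i : I, (x i - f x i) / (2 * Fintype.card I) := by
      apply sum_le_sum
      intro j _
      apply max_le
      · exact (div_pos (by linarith) (by positivity)).le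
      · linarith [hya j]
    rw [sum_const, card_univ, nsmul_eq_mul] at h2
    have h3 : (Fintype.card I : ℝ) * ((x i - f x i) / (2 * Fintype.card I)) = (x i - f x i) / 2 := by
      field_simp
    linarith

theorem nash_abs {J : Type} [Fintype J] [Nonempty J] (B : J → Type) [∀ j, Fintype (B j)]
    [∀ j, Nonempty (B j)] (W : ∀ j, B j → (∀ j, B j → ℝ) → ℝ) (hW : ∀ j b, Continuous (W j b)) :
    ∃ P : ∀ j, B j → ℝ, (∀ j b, 0 ≤ P j b) ∧ (∀ j, ∑ b, P j b = 1) ∧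
      ∀ j a, W j a P ≤ ∑ b, P j b * W j b P := by
  classical
  set k : ℝ := (Fintype.card J : ℝ) with hk
  have hk0 : 0 < k := by rw [hk]; exact_mod_cast Fintype.card_pos
  have hcB : ∀ j, (0:ℝ) < Fintype.card (B j) := fun j => by exact_mod_cast Fintype.card_pos
  let s : ((Σ j, B j) → ℝ) → J → ℝ := fun x j => ∑ b, x ⟨j, b⟩
  let r : ((Σ j, B j) → ℝ) → ∀ j, B j → ℝ := fun x j b =>
    (x ⟨j, b⟩ + max 0 (1/k - s x j) / Fintype.card (B j)) / max (s x j) (1/k)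
  let G : (∀ j, B j → ℝ) → ∀ j, B j → ℝ := fun P j a =>
    max 0 (W j a P - ∑ b, P j b * W j b P)
  let F : (∀ j, B j → ℝ) → ∀ j, B j → ℝ := fun P j a =>
    (P j a + G P j a) / (1 + ∑ b, G P j b)
  have hG0 : ∀ P j a, 0 ≤ G P j a := fun _ _ _ => le_max_left _ _
  have hGs : ∀ P j, 0 ≤ ∑ b, G P j b := fun P j => sum_nonneg fun b _ => hG0 P j b
  have hmx : ∀ x j, 0 < max (s x j) (1/k) := fun x j => lt_max_of_lt_right (by positivity)
  have hsc : ∀ j, Continuous (fun x => s x j) := fun j =>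
    continuous_finsetSum _ fun b _ => continuous_apply _
  have hrc : Continuous r := by
    refine continuous_pi fun j => continuous_pi fun b => ?_
    refine Continuous.div ?_ ((hsc j).max continuous_const) (fun x => (hmx x j).ne')
    exact (continuous_apply _).add
      ((continuous_const.max (continuous_const.sub (hsc j))).div_const _)
  have hPc : ∀ j b, Continuous (fun P : ∀ j, B j → ℝ => P j b) := fun j b =>
    (continuous_apply b).comp (continuous_apply j)
  have hGc : ∀ j a, Continuous (fun P => G P j a) := fun j a =>
    continuous_const.max ((hW j a).sub
      (continuous_finsetSum _ fun b _ => (hPc j b).mul (hW j b)))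
  have hFc : ∀ j a, Continuous (fun P => F P j a) := fun j a =>
    ((hPc j a).add (hGc j a)).div
      (continuous_const.add (continuous_finsetSum _ fun b _ => hGc j b))
      (fun P => by have := hGs P j; positivity)
  have hr0 : ∀ x, (∀ i, 0 ≤ x i) → ∀ j b, 0 ≤ r x j b := fun x hx j b =>
    div_nonneg (add_nonneg (hx _) (div_nonneg (le_max_left _ _) (hcB j).le)) (hmx x j).le
  have hr1 : ∀ x j, ∑ b, r x j b = 1 := by
    intro x j
    simp only [r]
    rw [← sum_div, sum_add_distrib, sum_const, card_univ, nsmul_eq_mul,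
      mul_div_cancel₀ _ (hcB j).ne', div_eq_one_iff_eq (hmx x j).ne']
    change s x j + _ = _
    rcases le_total (s x j) (1/k) with h | h
    · rw [max_eq_right h, max_eq_right (by linarith)]; ring
    · rw [max_eq_left h, max_eq_left (by linarith)]; ring
  have hF0 : ∀ P, (∀ j b, 0 ≤ P j b) → ∀ j b, 0 ≤ F P j b := fun P hP j b =>
    div_nonneg (add_nonneg (hP _ _) (hG0 _ _ _)) (by have := hGs P j; positivity)
  have hF1 : ∀ P, (∀ j, ∑ b, P j b = 1) → ∀ j, ∑ b, F P j b = 1 := by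
    intro P hP j
    have := hGs P j
    simp only [F]
    rw [← sum_div, sum_add_distrib, hP j]
    exact div_self (by positivity)
  have : Nonempty (Σ j, B j) := by
    obtain ⟨j⟩ : Nonempty J := inferInstance
    obtain ⟨b⟩ : Nonempty (B j) := inferInstance
    exact ⟨⟨j, b⟩⟩
  obtain ⟨x, hx, hfix⟩ := brouwer_simplex (I := Σ j, B j)
    (fun x i => F (r x) i.1 i.2 / k)
    (by
      apply Continuous.continuousOn
      exact continuous_pi fun i => ((hFc i.1 i.2).comp hrc).div_const _)
    (by
      intro x hx
      refine ⟨fun i => div_nonneg (hF0 _ (hr0 x hx.1) _ _) hk0.le, ?_⟩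
      rw [← sum_div, Fintype.sum_sigma]
      simp only [hF1 _ (hr1 x)]
      simp [← hk, hk0.ne'])
  have hfx : ∀ j b, F (r x) j b / k = x ⟨j, b⟩ := fun j b => congrFun hfix ⟨j, b⟩
  have hs : ∀ j, s x j = 1 / k := by
    intro j
    simp only [s, ← hfx]
    rw [← sum_div, hF1 _ (hr1 x)]
  have hrx : ∀ j b, F (r x) j b = r x j b := by
    intro j b
    have h1 : r x j b = x ⟨j, b⟩ * k := by
      simp only [r, hs]
      simp
    rw [h1, ← hfx]
    field_simp
  refine ⟨r x, hr0 x hx.1, hr1 x, fun j a => ?_⟩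
  set P := r x
  have hPs : ∑ b, P j b = 1 := hr1 x j
  set w := ∑ b, P j b * W j b P with hw
  set g := ∑ b, G P j b with hg
  have hgj : 0 ≤ g := hGs P j
  have hPg : ∀ b, G P j b = P j b * g := by
    intro b
    have := hrx j b
    simp only [F] at this
    rw [div_eq_iff (by positivity)] at this
    linarith
  have hGd : ∀ b, G P j b = max 0 (W j b P - w) := fun b => rfl
  have hsq : ∀ b, G P j b * G P j b = G P j b * (W j b P - w) := by
    intro b
    rw [hGd]
    rcases le_total 0 (W j b P - w) with h | h
    · rw [max_eq_right h]
    · rw [max_eq_left h]; simp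
  have hz : ∑ b, G P j b * G P j b = 0 := by
    have : ∀ b, G P j b * G P j b = g * (P j b * W j b P) - g * w * P j b := by
      intro b
      rw [hsq, hPg]; ring
    simp only [this]
    rw [sum_sub_distrib, ← mul_sum, ← mul_sum, hPs, ← hw]; ring
  have h0 := (sum_eq_zero_iff_of_nonneg (fun b _ => mul_self_nonneg _)).1 hz a (mem_univ a)
  have h1 := mul_self_eq_zero.1 h0
  have h2 : W j a P - w ≤ G P j a := le_max_right _ _
  linarith

theorem sum_prod_one {N : ℕ} {A : Fin N → Type} [∀ i, Fintype (A i)]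
    [∀ i, DecidableEq (A i)] (q : ∀ l, A l → ℝ) (hq : ∀ l, ∑ a, q l a = 1) :
    ∑ α : ∀ j, A j, ∏ l, q l (α l) = 1 := by
  have := Finset.prod_univ_sum (fun l => (univ : Finset (A l))) q
  rw [Fintype.piFinset_univ] at this
  rw [← this]
  simp [hq]

theorem sum_swap {N : ℕ} {A : Fin N → Type} [∀ i, Fintype (A i)]
    [∀ i, DecidableEq (A i)] (q : ∀ l, A l → ℝ) (i : Fin N) (hq : ∑ a, q i a = 1)
    (h : (∀ j, A j) → ℝ) :
    ∑ b, q i b * ∑ α : ∀ j, A j, (∏ l, q l (α l)) * h (Function.update α i b) =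
      ∑ α : ∀ j, A j, (∏ l, q l (α l)) * h α := by
  have hR : ∑ α : ∀ j, A j, (∏ l, q l (α l)) * h α =
      ∑ z : A i × (∀ j, A j), q i z.1 * ((∏ l, q l (z.2 l)) * h z.2) := by
    rw [Fintype.sum_prod_type]
    simp only [← mul_sum]
    rw [← sum_mul, hq, one_mul]
  have hL : ∑ b, q i b * ∑ α : ∀ j, A j, (∏ l, q l (α l)) * h (Function.update α i b) =
      ∑ z : A i × (∀ j, A j), q i z.1 * ((∏ l, q l (z.2 l)) * h (Function.update z.2 i z.1)) := by
    rw [Fintype.sum_prod_type]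
    simp only [← mul_sum]
  rw [hL, hR]
  have hinv : Function.Involutive
      (fun z : A i × (∀ j, A j) => (z.2 i, Function.update z.2 i z.1)) := by
    rintro ⟨b, α⟩
    simp
  refine Fintype.sum_equiv hinv.toPerm _ _ ?_
  rintro ⟨b, α⟩
  simp only [Function.Involutive.coe_toPerm]
  have e : ∀ α : ∀ j, A j, ∏ l, q l (α l) = q i (α i) * ∏ l ∈ univ.erase i, q l (α l) := fun α =>
    (mul_prod_erase _ _ (mem_univ i)).symm
  have e2 : ∏ l ∈ univ.erase i, q l (Function.update α i b l) = ∏ l ∈ univ.erase i, q l (α l) := by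
    apply prod_congr rfl
    intro l hl
    rw [Function.update_of_ne (ne_of_mem_erase hl)]
  rw [e, e (Function.update α i b), e2, Function.update_self]
  ring


/-- Every stochastic game (finite nonempty alphabets/action sets, pmf `π`,
bounded nonnegative utilities) has a conditional pmf `P` that is a NE for the
stochastic game; in particular the set of NE is nonempty. -/
theorem statement6
    (N : ℕ) (hN : 1 ≤ N)
    (Ω0 : Type) (Ωp : Fin N → Type) (A : Fin N → Type)
    [Fintype Ω0] [Nonempty Ω0]
    [∀ i, Fintype (Ωp i)] [∀ i, Nonempty (Ωp i)] [∀ i, DecidableEq (Ωp i)]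
    [∀ i, Fintype (A i)] [∀ i, Nonempty (A i)] [∀ i, DecidableEq (A i)]
    (π : Ω0 × (∀ j, Ωp j) → ℝ)
    (hπ0 : ∀ ω, 0 ≤ π ω) (hπ1 : ∑ ω : Ω0 × (∀ j, Ωp j), π ω = 1)
    (U : ∀ _ : Fin N, (∀ j, A j) → Ω0 × (∀ j, Ωp j) → ℝ)
    (umax : Fin N → ℝ) (humax : ∀ i, 0 ≤ umax i)
    (hU : ∀ i α ω, U i α ω ∈ Set.Icc 0 (umax i)) :
    ∃ P : Ω0 × (∀ j, Ωp j) → (∀ j, A j) → ℝ,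
      -- `P` is a conditional pmf
      (∀ ω α, 0 ≤ P ω α) ∧
      (∀ ω, ∑ α : ∀ j, A j, P ω α = 1) ∧
      -- `P` has product form
      (∃ Pc : ∀ i : Fin N, Ωp i → A i → ℝ,
        (∀ i v a, 0 ≤ Pc i v a) ∧ (∀ i v, ∑ a : A i, Pc i v a = 1) ∧
        (∀ (ω : Ω0 × (∀ j, Ωp j)) (α : ∀ j, A j), P ω α = ∏ i, Pc i (ω.2 i) (α i))) ∧
      -- `P` satisfies the stochastic CCE constraints
      (∃ θ : ∀ i : Fin N, Ωp i → ℝ,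
        (∀ i v, θ i v ∈ Set.Icc 0 (umax i)) ∧
        (∀ i : Fin N,
          ∑ ω : Ω0 × (∀ j, Ωp j), ∑ α : ∀ j, A j, π ω * P ω α * U i α ω ≥
          ∑ ω : Ω0 × (∀ j, Ωp j), ∑ α : ∀ j, A j, π ω * P ω α * θ i (ω.2 i)) ∧
        (∀ (i : Fin N) (v : Ωp i) (β : A i),
          ∑ ω ∈ Finset.univ.filter (fun ω : Ω0 × (∀ j, Ωp j) => ω.2 i = v),
            ∑ α : ∀ j, A j, π ω * P ω α * θ i v ≥
          ∑ ω ∈ Finset.univ.filter (fun ω : Ω0 × (∀ j, Ωp j) => ω.2 i = v),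
            ∑ α : ∀ j, A j, π ω * P ω α * U i (Function.update α i β) ω)) := by

  let W : ∀ j : (Σ i, Ωp i), A j.1 → (∀ j : (Σ i, Ωp i), A j.1 → ℝ) → ℝ := fun j β P =>
    ∑ ω ∈ Finset.univ.filter (fun ω : Ω0 × (∀ j, Ωp j) => ω.2 j.1 = j.2),
      ∑ α : ∀ j, A j, π ω * (∏ l, P ⟨l, ω.2 l⟩ (α l)) * U j.1 (Function.update α j.1 β) ω
  have hW : ∀ j b, Continuous (W j b) := by
    intro j b
    refine continuous_finsetSum _ fun ω _ => continuous_finsetSum _ fun α _ => ?_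
    refine (continuous_const.mul (continuous_finsetProd _ fun l _ => ?_)).mul continuous_const
    exact (continuous_apply (α l)).comp (continuous_apply (⟨l, ω.2 l⟩ : Σ i, Ωp i))
  have hne : Nonempty (Σ i, Ωp i) := ⟨⟨⟨0, hN⟩, Classical.arbitrary _⟩⟩
  obtain ⟨Q, hQ0, hQ1, hQ⟩ := nash_abs (J := Σ i, Ωp i) (fun j => A j.1) W hW
  let P : Ω0 × (∀ j, Ωp j) → (∀ j, A j) → ℝ := fun ω α => ∏ l, Q ⟨l, ω.2 l⟩ (α l)
  have hP0 : ∀ ω α, 0 ≤ P ω α := fun ω α => prod_nonneg fun l _ => hQ0 _ _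
  have hP1 : ∀ ω, ∑ α, P ω α = 1 := fun ω =>
    sum_prod_one (fun l => Q ⟨l, ω.2 l⟩) (fun l => hQ1 ⟨l, ω.2 l⟩)
  let w : ∀ i, Ωp i → ℝ := fun i v =>
    ∑ ω ∈ Finset.univ.filter (fun ω : Ω0 × (∀ j, Ωp j) => ω.2 i = v),
      ∑ α : ∀ j, A j, π ω * P ω α * U i α ω
  let μ : ∀ i, Ωp i → ℝ := fun i v =>
    ∑ ω ∈ Finset.univ.filter (fun ω : Ω0 × (∀ j, Ωp j) => ω.2 i = v), π ω
  have hμ0 : ∀ i v, 0 ≤ μ i v := fun i v => sum_nonneg fun ω _ => hπ0 ω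
  have hw0 : ∀ i v, 0 ≤ w i v := fun i v => sum_nonneg fun ω _ => sum_nonneg fun α _ =>
    mul_nonneg (mul_nonneg (hπ0 ω) (hP0 ω α)) (hU i α ω).1
  have hconst : ∀ ω (t : ℝ), ∑ α : ∀ j, A j, π ω * P ω α * t = π ω * t := by
    intro ω t
    rw [← sum_mul, ← mul_sum, hP1, mul_one]
  have hw1 : ∀ i v, w i v ≤ umax i * μ i v := by
    intro i v
    rw [mul_sum]
    refine sum_le_sum fun ω _ => ?_
    rw [mul_comm, ← hconst]
    exact sum_le_sum fun α _ =>
      mul_le_mul_of_nonneg_left (hU i α ω).2 (mul_nonneg (hπ0 ω) (hP0 ω α))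
  have hwW : ∀ i v, ∑ b, Q ⟨i, v⟩ b * W ⟨i, v⟩ b Q = w i v := by
    intro i v
    simp only [W, w, mul_sum]
    rw [sum_comm]
    refine sum_congr rfl fun ω hω => ?_
    have hv : ω.2 i = v := (mem_filter.1 hω).2
    have := sum_swap (fun l => Q ⟨l, ω.2 l⟩) i (hQ1 ⟨i, ω.2 i⟩) (fun α => U i α ω)
    have h2 := congrArg (fun t => π ω * t) this
    simp only [mul_sum] at h2
    subst hv
    simp only [P]
    convert h2 using 1
    · refine sum_congr rfl fun b _ => sum_congr rfl fun α _ => ?_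
      ring
    · refine sum_congr rfl fun α _ => ?_
      ring
  have hθ : ∀ i v, μ i v * (w i v / μ i v) = w i v := by
    intro i v
    by_cases h : μ i v = 0
    · have h1 := hw1 i v
      have h2 := hw0 i v
      rw [h, mul_zero] at h1
      rw [h, zero_mul]
      linarith
    · field_simp
  have hLμ : ∀ i v (t : ℝ), ∑ ω ∈ Finset.univ.filter (fun ω : Ω0 × (∀ j, Ωp j) => ω.2 i = v),
      ∑ α : ∀ j, A j, π ω * P ω α * t = μ i v * t := by
    intro i v t
    simp only [hconst]
    rw [← sum_mul]
  refine ⟨P, hP0, hP1, ⟨fun i v => Q ⟨i, v⟩, fun i v => hQ0 ⟨i, v⟩, fun i v => hQ1 ⟨i, v⟩,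
    fun ω α => rfl⟩, fun i v => w i v / μ i v, ?_, ?_, ?_⟩
  · intro i v
    exact ⟨div_nonneg (hw0 i v) (hμ0 i v), div_le_of_le_mul₀ (hμ0 i v) (humax i) (hw1 i v)⟩
  · intro i
    apply le_of_eq
    rw [← sum_fiberwise univ (fun ω : Ω0 × (∀ j, Ωp j) => ω.2 i),
      ← sum_fiberwise univ (fun ω : Ω0 × (∀ j, Ωp j) => ω.2 i)
        (fun ω => ∑ α : ∀ j, A j, π ω * P ω α * U i α ω)]
    refine sum_congr rfl fun v _ => ?_
    refine Eq.trans ?_ ((hLμ i v _).trans (hθ i v))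
    refine sum_congr rfl fun ω hω => ?_
    rw [(mem_filter.1 hω).2]
  · intro i v β
    rw [hLμ, hθ, ← hwW]
    exact hQ ⟨i, v⟩ β
end

section
/- Every conditional probability mass function P that is a NE for the stochastic game is also a CE for the stochastic game. -/
open Finset

lemma key_fiber {N : ℕ} {A : Fin N → Type} [∀ i, Fintype (A i)] [∀ i, DecidableEq (A i)]
    (p : ∀ i, A i → ℝ) (i : Fin N) (hp : ∑ a, p i a = 1) (g : (∀ j, A j) → ℝ)
    (hg : ∀ α c, g (Function.update α i c) = g α) (c : A i) :
    ∑ α ∈ Finset.univ.filter (fun α : ∀ j, A j => α i = c), (∏ j, p j (α j)) * g α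
      = p i c * ∑ α : ∀ j, A j, (∏ j, p j (α j)) * g α := by
  set Q : (∀ j, A j) → ℝ := fun α => ∏ j ∈ Finset.univ.erase i, p j (α j) with hQ
  have hfac : ∀ α : ∀ j, A j, ∏ j, p j (α j) = p i (α i) * Q α := fun α =>
    (Finset.mul_prod_erase Finset.univ (fun j => p j (α j)) (Finset.mem_univ i)).symm
  have hQu : ∀ α d, Q (Function.update α i d) = Q α := by
    intro α d
    refine Finset.prod_congr rfl fun j hj => ?_
    rw [Function.update_of_ne (Finset.ne_of_mem_erase hj)]
  set F : A i → ℝ := fun d =>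
    ∑ α ∈ Finset.univ.filter (fun α : ∀ j, A j => α i = d), Q α * g α with hF
  have h1 : ∀ d, ∑ α ∈ Finset.univ.filter (fun α : ∀ j, A j => α i = d),
      (∏ j, p j (α j)) * g α = p i d * F d := by
    intro d
    rw [hF, Finset.mul_sum]
    refine Finset.sum_congr rfl fun α hα => ?_
    rw [hfac, (Finset.mem_filter.mp hα).2, mul_assoc]
  have h2 : ∀ d, F d = F c := by
    intro d
    refine Finset.sum_nbij' (fun α => Function.update α i c) (fun α => Function.update α i d)
      ?_ ?_ ?_ ?_ ?_
    · intro α _; simp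
    · intro α _; simp
    · intro α hα
      have := (Finset.mem_filter.mp hα).2
      simp [← this]
    · intro α hα
      have := (Finset.mem_filter.mp hα).2
      simp [← this]
    · intro α _
      simp only [hQu, hg]
  rw [h1, ← Finset.sum_fiberwise Finset.univ (fun α : ∀ j, A j => α i)]
  simp only [h1, h2]
  rw [← Finset.sum_mul, hp, one_mul]

/-- Every conditional pmf `P` that is a NE for the stochastic game (CCE
constraints plus product form) is also a CE for the stochastic game. -/
theorem statement8
    (N : ℕ) (hN : 1 ≤ N)
    (Ω0 : Type) (Ωp : Fin N → Type) (A : Fin N → Type)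
    [Fintype Ω0] [Nonempty Ω0]
    [∀ i, Fintype (Ωp i)] [∀ i, Nonempty (Ωp i)] [∀ i, DecidableEq (Ωp i)]
    [∀ i, Fintype (A i)] [∀ i, Nonempty (A i)] [∀ i, DecidableEq (A i)]
    (π : Ω0 × (∀ j, Ωp j) → ℝ)
    (hπ0 : ∀ ω, 0 ≤ π ω) (hπ1 : ∑ ω : Ω0 × (∀ j, Ωp j), π ω = 1)
    (U : ∀ _ : Fin N, (∀ j, A j) → Ω0 × (∀ j, Ωp j) → ℝ)
    (umax : Fin N → ℝ) (humax : ∀ i, 0 ≤ umax i)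
    (hU : ∀ i α ω, U i α ω ∈ Set.Icc 0 (umax i))
    (P : Ω0 × (∀ j, Ωp j) → (∀ j, A j) → ℝ)
    (hP0 : ∀ ω α, 0 ≤ P ω α)
    (hP1 : ∀ ω, ∑ α : ∀ j, A j, P ω α = 1)
    -- `P` has product form
    (hprod : ∃ Pc : ∀ i : Fin N, Ωp i → A i → ℝ,
      (∀ i v a, 0 ≤ Pc i v a) ∧ (∀ i v, ∑ a : A i, Pc i v a = 1) ∧
      (∀ (ω : Ω0 × (∀ j, Ωp j)) (α : ∀ j, A j), P ω α = ∏ i, Pc i (ω.2 i) (α i)))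
    -- `P` satisfies the stochastic CCE constraints
    (hCCE : ∃ θ : ∀ i : Fin N, Ωp i → ℝ,
      (∀ i v, θ i v ∈ Set.Icc 0 (umax i)) ∧
      (∀ i : Fin N,
        ∑ ω : Ω0 × (∀ j, Ωp j), ∑ α : ∀ j, A j, π ω * P ω α * U i α ω ≥
        ∑ ω : Ω0 × (∀ j, Ωp j), ∑ α : ∀ j, A j, π ω * P ω α * θ i (ω.2 i)) ∧
      (∀ (i : Fin N) (v : Ωp i) (β : A i),
        ∑ ω ∈ Finset.univ.filter (fun ω : Ω0 × (∀ j, Ωp j) => ω.2 i = v),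
          ∑ α : ∀ j, A j, π ω * P ω α * θ i v ≥
        ∑ ω ∈ Finset.univ.filter (fun ω : Ω0 × (∀ j, Ωp j) => ω.2 i = v),
          ∑ α : ∀ j, A j, π ω * P ω α * U i (Function.update α i β) ω)) :
    -- `P` is a CE for the stochastic game
    ∃ θ : ∀ i : Fin N, Ωp i → A i → ℝ,
      (∀ i v c, θ i v c ∈ Set.Icc 0 (umax i)) ∧
      (∀ i : Fin N,
        ∑ ω : Ω0 × (∀ j, Ωp j), ∑ α : ∀ j, A j,
          π ω * P ω α * (U i α ω - θ i (ω.2 i) (α i)) ≥ 0) ∧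
      (∀ (i : Fin N) (v : Ωp i) (c : A i) (β : A i),
        ∑ ω ∈ Finset.univ.filter (fun ω : Ω0 × (∀ j, Ωp j) => ω.2 i = v),
          ∑ α ∈ Finset.univ.filter (fun α : ∀ j, A j => α i = c),
            π ω * P ω α * θ i v c ≥
        ∑ ω ∈ Finset.univ.filter (fun ω : Ω0 × (∀ j, Ωp j) => ω.2 i = v),
          ∑ α ∈ Finset.univ.filter (fun α : ∀ j, A j => α i = c),
            π ω * P ω α * U i (Function.update α i β) ω) := by
  obtain ⟨Pc, hPc0, hPc1, hPc⟩ := hprod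
  obtain ⟨θ, hθ, h1, h2⟩ := hCCE
  refine ⟨fun i v _ => θ i v, fun i v _ => hθ i v, fun i => ?_, fun i v c β => ?_⟩
  · have := h1 i
    simp only [mul_sub, Finset.sum_sub_distrib]
    linarith
  · have key : ∀ g : (∀ j, A j) → Ω0 × (∀ j, Ωp j) → ℝ,
        (∀ ω α d, g (Function.update α i d) ω = g α ω) →
        ∑ ω ∈ Finset.univ.filter (fun ω : Ω0 × (∀ j, Ωp j) => ω.2 i = v),
          ∑ α ∈ Finset.univ.filter (fun α : ∀ j, A j => α i = c), π ω * P ω α * g α ω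
        = Pc i v c * ∑ ω ∈ Finset.univ.filter (fun ω : Ω0 × (∀ j, Ωp j) => ω.2 i = v),
          ∑ α : ∀ j, A j, π ω * P ω α * g α ω := by
      intro g hg
      rw [Finset.mul_sum]
      refine Finset.sum_congr rfl fun ω hω => ?_
      have hv := (Finset.mem_filter.mp hω).2
      have := key_fiber (fun j => Pc j (ω.2 j)) i (hPc1 i _) (fun α => g α ω) (hg ω) c
      simp only [mul_assoc, ← Finset.mul_sum, hPc]
      rw [this, hv]
      ring
    have e1 := key (fun _ _ => θ i v) (fun _ _ _ => rfl)
    have e2 := key (fun α ω => U i (Function.update α i β) ω) (fun _ _ _ => by simp)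
    rw [e1, e2]
    exact mul_le_mul_of_nonneg_left (h2 i v β) (hPc0 i v c)
end

section
/- Identify each conditional probability mass function P with the point (P(α|ω))_{(ω,α)} of the finite-dimensional real vector space ℝ^{Ω×𝒜}. Then the set of all conditional pmfs P that are CCE for the stochastic game is a closed, bounded, convex subset of ℝ^{Ω×𝒜}. -/
open Finset

/-- Identifying conditional pmfs `P` with points of `ℝ^{Ω×𝒜}`, the set of
all conditional pmfs that are CCE for the stochastic game is closed, bounded and
convex. -/
theorem statement9
    (N : ℕ) (hN : 1 ≤ N)
    (Ω0 : Type) (Ωp : Fin N → Type) (A : Fin N → Type)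
    [Fintype Ω0] [Nonempty Ω0]
    [∀ i, Fintype (Ωp i)] [∀ i, Nonempty (Ωp i)] [∀ i, DecidableEq (Ωp i)]
    [∀ i, Fintype (A i)] [∀ i, Nonempty (A i)] [∀ i, DecidableEq (A i)]
    (π : Ω0 × (∀ j, Ωp j) → ℝ)
    (hπ0 : ∀ ω, 0 ≤ π ω) (hπ1 : ∑ ω : Ω0 × (∀ j, Ωp j), π ω = 1)
    (U : ∀ _ : Fin N, (∀ j, A j) → Ω0 × (∀ j, Ωp j) → ℝ)
    (umax : Fin N → ℝ) (humax : ∀ i, 0 ≤ umax i)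
    (hU : ∀ i α ω, U i α ω ∈ Set.Icc 0 (umax i))
    (S : Set ((Ω0 × (∀ j, Ωp j)) × (∀ j, A j) → ℝ))
    (hS : S = {p | (∀ x, 0 ≤ p x) ∧
      (∀ ω : Ω0 × (∀ j, Ωp j), ∑ α : ∀ j, A j, p (ω, α) = 1) ∧
      -- `p` (viewed as a conditional pmf) is a CCE for the stochastic game
      (∃ θ : ∀ i : Fin N, Ωp i → ℝ,
        (∀ i v, θ i v ∈ Set.Icc 0 (umax i)) ∧
        (∀ i : Fin N,
          ∑ ω : Ω0 × (∀ j, Ωp j), ∑ α : ∀ j, A j, π ω * p (ω, α) * U i α ω ≥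
          ∑ ω : Ω0 × (∀ j, Ωp j), ∑ α : ∀ j, A j, π ω * p (ω, α) * θ i (ω.2 i)) ∧
        (∀ (i : Fin N) (v : Ωp i) (β : A i),
          ∑ ω ∈ Finset.univ.filter (fun ω : Ω0 × (∀ j, Ωp j) => ω.2 i = v),
            ∑ α : ∀ j, A j, π ω * p (ω, α) * θ i v ≥
          ∑ ω ∈ Finset.univ.filter (fun ω : Ω0 × (∀ j, Ωp j) => ω.2 i = v),
            ∑ α : ∀ j, A j, π ω * p (ω, α) * U i (Function.update α i β) ω))}) :
    IsClosed S ∧ Bornology.IsBounded S ∧ Convex ℝ S := by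
  have hcomp : IsCompact S := by
    let T : Set (((Ω0 × (∀ j, Ωp j)) × (∀ j, A j) → ℝ) × (∀ i : Fin N, Ωp i → ℝ)) :=
      {q | (∀ x, 0 ≤ q.1 x) ∧
      (∀ ω : Ω0 × (∀ j, Ωp j), ∑ α : ∀ j, A j, q.1 (ω, α) = 1) ∧
        (∀ i v, q.2 i v ∈ Set.Icc 0 (umax i)) ∧
        (∀ i : Fin N,
          ∑ ω : Ω0 × (∀ j, Ωp j), ∑ α : ∀ j, A j, π ω * q.1 (ω, α) * U i α ω ≥
          ∑ ω : Ω0 × (∀ j, Ωp j), ∑ α : ∀ j, A j, π ω * q.1 (ω, α) * q.2 i (ω.2 i)) ∧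
        (∀ (i : Fin N) (v : Ωp i) (β : A i),
          ∑ ω ∈ Finset.univ.filter (fun ω : Ω0 × (∀ j, Ωp j) => ω.2 i = v),
            ∑ α : ∀ j, A j, π ω * q.1 (ω, α) * q.2 i v ≥
          ∑ ω ∈ Finset.univ.filter (fun ω : Ω0 × (∀ j, Ωp j) => ω.2 i = v),
            ∑ α : ∀ j, A j, π ω * q.1 (ω, α) * U i (Function.update α i β) ω)}
    have hST : S = Prod.fst '' T := by
      rw [hS]
      ext p
      constructor
      · rintro ⟨h0, h1, θ, h2, h3, h4⟩
        exact ⟨(p, θ), ⟨h0, h1, h2, h3, h4⟩, rfl⟩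
      · rintro ⟨⟨p', θ⟩, ⟨h0, h1, h2, h3, h4⟩, rfl⟩
        exact ⟨h0, h1, θ, h2, h3, h4⟩
    have hcl : IsClosed T := by
      have c1 : ∀ x, Continuous fun q : ((Ω0 × (∀ j, Ωp j)) × (∀ j, A j) → ℝ) ×
          (∀ i : Fin N, Ωp i → ℝ) => q.1 x := fun x => by fun_prop
      have c2 : ∀ i v, Continuous fun q : ((Ω0 × (∀ j, Ωp j)) × (∀ j, A j) → ℝ) ×
          (∀ i : Fin N, Ωp i → ℝ) => q.2 i v := fun i v => by fun_prop
      refine IsClosed.and ?_ (IsClosed.and ?_ (IsClosed.and ?_ (IsClosed.and ?_ ?_)))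
      · simp only [Set.setOf_forall]
        exact isClosed_iInter fun x => isClosed_le continuous_const (c1 x)
      · simp only [Set.setOf_forall]
        exact isClosed_iInter fun ω => isClosed_eq
          (continuous_finsetSum _ fun α _ => c1 _) continuous_const
      · simp only [Set.setOf_forall]
        exact isClosed_iInter fun i => isClosed_iInter fun v =>
          isClosed_Icc.preimage (c2 i v)
      · simp only [Set.setOf_forall]
        exact isClosed_iInter fun i => isClosed_le
          (continuous_finsetSum _ fun ω _ => continuous_finsetSum _ fun α _ =>
            (continuous_const.mul (c1 _)).mul (c2 _ _))
          (continuous_finsetSum _ fun ω _ => continuous_finsetSum _ fun α _ =>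
            (continuous_const.mul (c1 _)).mul continuous_const)
      · simp only [Set.setOf_forall]
        exact isClosed_iInter fun i => isClosed_iInter fun v => isClosed_iInter fun β =>
          isClosed_le
          (continuous_finsetSum _ fun ω _ => continuous_finsetSum _ fun α _ =>
            (continuous_const.mul (c1 _)).mul continuous_const)
          (continuous_finsetSum _ fun ω _ => continuous_finsetSum _ fun α _ =>
            (continuous_const.mul (c1 _)).mul (c2 _ _))
    rw [hST]
    refine IsCompact.image ?_ continuous_fst
    have hK : IsCompact ((Set.univ.pi fun _ => Set.Icc (0:ℝ) 1) ×ˢ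
        (Set.univ.pi fun i => Set.univ.pi fun _ => Set.Icc (0:ℝ) (umax i)) :
        Set (((Ω0 × (∀ j, Ωp j)) × (∀ j, A j) → ℝ) × (∀ i : Fin N, Ωp i → ℝ))) :=
      (isCompact_univ_pi fun _ => isCompact_Icc).prod
        (isCompact_univ_pi fun _ => isCompact_univ_pi fun _ => isCompact_Icc)
    refine hK.of_isClosed_subset hcl ?_
    rintro ⟨p, θ⟩ ⟨h0, h1, h2, -, -⟩
    refine ⟨fun x _ => ⟨h0 x, ?_⟩, fun i _ v _ => h2 i v⟩
    obtain ⟨ω, α⟩ := x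
    rw [← h1 ω]
    exact Finset.single_le_sum (f := fun α => p (ω, α)) (fun α _ => h0 (ω, α))
      (Finset.mem_univ α)
  refine ⟨hcomp.isClosed, hcomp.isBounded, ?_⟩
  have key : ∀ p : (Ω0 × (∀ j, Ωp j)) × (∀ j, A j) → ℝ,
      (∀ ω : Ω0 × (∀ j, Ωp j), ∑ α : ∀ j, A j, p (ω, α) = 1) →
      ∀ ω c, ∑ α : ∀ j, A j, π ω * p (ω, α) * c = π ω * c := by
    intro p hp ω c
    rw [← Finset.sum_mul, ← Finset.mul_sum, hp, mul_one]
  have lin : ∀ (s : Finset (Ω0 × (∀ j, Ωp j))) (a b : ℝ)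
      (x y : (Ω0 × (∀ j, Ωp j)) × (∀ j, A j) → ℝ)
      (V : (∀ j, A j) → Ω0 × (∀ j, Ωp j) → ℝ),
      ∑ ω ∈ s, ∑ α : ∀ j, A j, π ω * (a • x + b • y) (ω, α) * V α ω =
      a * ∑ ω ∈ s, ∑ α : ∀ j, A j, π ω * x (ω, α) * V α ω +
      b * ∑ ω ∈ s, ∑ α : ∀ j, A j, π ω * y (ω, α) * V α ω := by
    intro s a b x y V
    simp only [Finset.mul_sum, ← Finset.sum_add_distrib]
    refine Finset.sum_congr rfl fun ω _ => Finset.sum_congr rfl fun α _ => ?_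
    simp only [Pi.add_apply, Pi.smul_apply, smul_eq_mul]
    ring
  have lin2 : ∀ (s : Finset (Ω0 × (∀ j, Ωp j))) (a b : ℝ) (f g : Ω0 × (∀ j, Ωp j) → ℝ),
      ∑ ω ∈ s, π ω * (a * f ω + b * g ω) =
      a * ∑ ω ∈ s, π ω * f ω + b * ∑ ω ∈ s, π ω * g ω := by
    intro s a b f g
    simp only [Finset.mul_sum, ← Finset.sum_add_distrib]
    exact Finset.sum_congr rfl fun ω _ => by ring
  rw [hS]
  rintro x ⟨x0, x1, θ, x2, x3, x4⟩ y ⟨y0, y1, η, y2, y3, y4⟩ a b ha hb hab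
  have z1 : ∀ ω : Ω0 × (∀ j, Ωp j), ∑ α : ∀ j, A j, (a • x + b • y) (ω, α) = 1 := by
    intro ω
    simp only [Pi.add_apply, Pi.smul_apply, smul_eq_mul, Finset.sum_add_distrib,
      ← Finset.mul_sum, x1, y1, mul_one, hab]
  simp only [key x x1] at x3 x4
  simp only [key y y1] at y3 y4
  refine ⟨fun t => ?_, z1, fun i v => a * θ i v + b * η i v, fun i v => ?_, fun i => ?_,
    fun i v β => ?_⟩
  · exact add_nonneg (mul_nonneg ha (x0 t)) (mul_nonneg hb (y0 t))
  · exact (convex_Icc 0 (umax i)) (x2 i v) (y2 i v) ha hb hab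
  · simp only [key _ z1]
    rw [lin _ a b x y (U i), lin2 _ a b (fun ω => θ i (ω.2 i)) (fun ω => η i (ω.2 i))]
    exact add_le_add (mul_le_mul_of_nonneg_left (x3 i) ha) (mul_le_mul_of_nonneg_left (y3 i) hb)
  · simp only [key _ z1]
    rw [lin _ a b x y (fun α ω => U i (Function.update α i β) ω),
      lin2 _ a b (fun ω => θ i v) (fun ω => η i v)]
    exact add_le_add (mul_le_mul_of_nonneg_left (x4 i v β) ha)
      (mul_le_mul_of_nonneg_left (y4 i v β) hb)
end

section
/- Identify each conditional probability mass function P with the point (P(α|ω))_{(ω,α)} of the finite-dimensional real vector space ℝ^{Ω×𝒜}. Then the set of all conditional pmfs P that are CE for the stochastic game is a closed, bounded, convex subset of ℝ^{Ω×𝒜}. -/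
open Finset

theorem aux_fiber {X Y V C : Type*} [Fintype X] [Fintype Y] [Fintype V] [Fintype C]
    [DecidableEq V] [DecidableEq C] (g : X → V) (h : Y → C) (f : X → Y → ℝ) :
    ∑ v, ∑ c, ∑ x ∈ Finset.univ.filter (fun x => g x = v),
      ∑ y ∈ Finset.univ.filter (fun y => h y = c), f x y = ∑ x, ∑ y, f x y := by
  rw [← Finset.sum_fiberwise Finset.univ g (fun x => ∑ y, f x y)]
  refine Finset.sum_congr rfl fun v _ => ?_
  rw [Finset.sum_comm]
  refine Finset.sum_congr rfl fun x _ => ?_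
  exact Finset.sum_fiberwise Finset.univ h (f x)

/-- One-player characterization. -/
theorem aux_char {X Y V C : Type*} [Fintype X] [Fintype Y] [Fintype V] [Fintype C] [Nonempty C]
    [DecidableEq V] [DecidableEq C] (g : X → V) (h : Y → C) (q : X → Y → ℝ)
    (hq : ∀ x y, 0 ≤ q x y) (u : X → Y → ℝ) (u' : C → X → Y → ℝ) (M : ℝ) (hM : 0 ≤ M)
    (hu : ∀ b x y, u' b x y ∈ Set.Icc 0 M) :
    (∃ θ : V → C → ℝ, (∀ v c, θ v c ∈ Set.Icc 0 M) ∧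
      ∑ x, ∑ y, q x y * (u x y - θ (g x) (h y)) ≥ 0 ∧
      ∀ v c b, ∑ x ∈ Finset.univ.filter (fun x => g x = v),
        ∑ y ∈ Finset.univ.filter (fun y => h y = c), q x y * θ v c ≥
        ∑ x ∈ Finset.univ.filter (fun x => g x = v),
        ∑ y ∈ Finset.univ.filter (fun y => h y = c), q x y * u' b x y) ↔
    ∀ b : V → C → C, ∑ x, ∑ y, q x y * u' (b (g x) (h y)) x y ≤ ∑ x, ∑ y, q x y * u x y := by
  have key : ∀ t : V → C → X → Y → ℝ, ∑ x, ∑ y, q x y * t (g x) (h y) x y =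
      ∑ v, ∑ c, ∑ x ∈ Finset.univ.filter (fun x => g x = v),
        ∑ y ∈ Finset.univ.filter (fun y => h y = c), q x y * t v c x y := by
    intro t
    rw [← aux_fiber g h]
    refine Finset.sum_congr rfl fun v _ => Finset.sum_congr rfl fun c _ =>
      Finset.sum_congr rfl fun x hx => Finset.sum_congr rfl fun y hy => ?_
    rw [(Finset.mem_filter.1 hx).2, (Finset.mem_filter.1 hy).2]
  constructor
  · rintro ⟨θ, -, h1, h2⟩ b
    simp only [mul_sub, Finset.sum_sub_distrib] at h1
    have h3 := key (fun v c _ _ => θ v c)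
    have h4 := key (fun v c x y => u' (b v c) x y)
    have h5 := Finset.sum_le_sum fun v (_ : v ∈ Finset.univ) =>
      Finset.sum_le_sum fun c (_ : c ∈ Finset.univ) => h2 v c (b v c)
    linarith
  · intro H
    let L : V → C → C → ℝ := fun v c b => ∑ x ∈ Finset.univ.filter (fun x => g x = v),
        ∑ y ∈ Finset.univ.filter (fun y => h y = c), q x y * u' b x y
    let w : V → C → ℝ := fun v c => ∑ x ∈ Finset.univ.filter (fun x => g x = v),
        ∑ y ∈ Finset.univ.filter (fun y => h y = c), q x y
    have hw : ∀ v c, 0 ≤ w v c := fun v c =>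
      Finset.sum_nonneg fun x _ => Finset.sum_nonneg fun y _ => hq x y
    have hL0 : ∀ v c b, 0 ≤ L v c b := fun v c b =>
      Finset.sum_nonneg fun x _ => Finset.sum_nonneg fun y _ => mul_nonneg (hq x y) (hu b x y).1
    have hL1 : ∀ v c b, L v c b ≤ w v c * M := by
      intro v c b
      simp only [L, w, Finset.sum_mul]
      exact Finset.sum_le_sum fun x _ => Finset.sum_le_sum fun y _ =>
        mul_le_mul_of_nonneg_left (hu b x y).2 (hq x y)
    have hex : ∀ v c, ∃ b, ∀ b', L v c b' ≤ L v c b := fun v c => Finite.exists_max (L v c)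
    choose b hb using hex
    have hmul : ∀ v c, w v c * (L v c (b v c) / w v c) = L v c (b v c) := by
      intro v c
      rcases eq_or_ne (w v c) 0 with h0 | h0
      · have := hL1 v c (b v c)
        rw [h0, zero_mul] at this
        rw [h0, zero_mul]
        exact le_antisymm (hL0 _ _ _) this
      · field_simp
    have hwθ : ∀ v c (r : ℝ), ∑ x ∈ Finset.univ.filter (fun x => g x = v),
        ∑ y ∈ Finset.univ.filter (fun y => h y = c), q x y * r = w v c * r := by
      intro v c r
      simp only [w, Finset.sum_mul]
    refine ⟨fun v c => L v c (b v c) / w v c, fun v c => ⟨div_nonneg (hL0 _ _ _) (hw _ _), ?_⟩,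
      ?_, ?_⟩
    · refine div_le_of_le_mul₀ (hw _ _) hM ?_
      rw [mul_comm]
      exact hL1 _ _ _
    · simp only [mul_sub, Finset.sum_sub_distrib]
      have h3 := key (fun v c _ _ => L v c (b v c) / w v c)
      have h4 := key (fun v c x y => u' (b v c) x y)
      simp only [hwθ, hmul] at h3
      have := H b
      rw [h3]
      rw [h4] at this
      exact sub_nonneg.2 this
    · intro v c b'
      rw [hwθ, hmul]
      exact hb v c b'

/-- Identifying conditional pmfs `P` with points of `ℝ^{Ω×𝒜}`, the set of
all conditional pmfs that are CE for the stochastic game is closed, bounded and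
convex. -/
theorem statement10
    (N : ℕ) (hN : 1 ≤ N)
    (Ω0 : Type) (Ωp : Fin N → Type) (A : Fin N → Type)
    [Fintype Ω0] [Nonempty Ω0]
    [∀ i, Fintype (Ωp i)] [∀ i, Nonempty (Ωp i)] [∀ i, DecidableEq (Ωp i)]
    [∀ i, Fintype (A i)] [∀ i, Nonempty (A i)] [∀ i, DecidableEq (A i)]
    (π : Ω0 × (∀ j, Ωp j) → ℝ)
    (hπ0 : ∀ ω, 0 ≤ π ω) (hπ1 : ∑ ω : Ω0 × (∀ j, Ωp j), π ω = 1)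
    (U : ∀ _ : Fin N, (∀ j, A j) → Ω0 × (∀ j, Ωp j) → ℝ)
    (umax : Fin N → ℝ) (humax : ∀ i, 0 ≤ umax i)
    (hU : ∀ i α ω, U i α ω ∈ Set.Icc 0 (umax i))
    (S : Set ((Ω0 × (∀ j, Ωp j)) × (∀ j, A j) → ℝ))
    (hS : S = {p | (∀ x, 0 ≤ p x) ∧
      (∀ ω : Ω0 × (∀ j, Ωp j), ∑ α : ∀ j, A j, p (ω, α) = 1) ∧
      -- `p` (viewed as a conditional pmf) is a CE for the stochastic game
      (∃ θ : ∀ i : Fin N, Ωp i → A i → ℝ,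
        (∀ i v c, θ i v c ∈ Set.Icc 0 (umax i)) ∧
        (∀ i : Fin N,
          ∑ ω : Ω0 × (∀ j, Ωp j), ∑ α : ∀ j, A j,
            π ω * p (ω, α) * (U i α ω - θ i (ω.2 i) (α i)) ≥ 0) ∧
        (∀ (i : Fin N) (v : Ωp i) (c : A i) (β : A i),
          ∑ ω ∈ Finset.univ.filter (fun ω : Ω0 × (∀ j, Ωp j) => ω.2 i = v),
            ∑ α ∈ Finset.univ.filter (fun α : ∀ j, A j => α i = c),
              π ω * p (ω, α) * θ i v c ≥
          ∑ ω ∈ Finset.univ.filter (fun ω : Ω0 × (∀ j, Ωp j) => ω.2 i = v),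
            ∑ α ∈ Finset.univ.filter (fun α : ∀ j, A j => α i = c),
              π ω * p (ω, α) * U i (Function.update α i β) ω))}) :
    IsClosed S ∧ Bornology.IsBounded S ∧ Convex ℝ S := by
  have hS' : S = {p | (∀ x, 0 ≤ p x) ∧
      (∀ ω : Ω0 × (∀ j, Ωp j), ∑ α : ∀ j, A j, p (ω, α) = 1) ∧
      ∀ (i : Fin N) (b : Ωp i → A i → A i),
        ∑ ω : Ω0 × (∀ j, Ωp j), ∑ α : ∀ j, A j,
          π ω * p (ω, α) * U i (Function.update α i (b (ω.2 i) (α i))) ω ≤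
        ∑ ω : Ω0 × (∀ j, Ωp j), ∑ α : ∀ j, A j, π ω * p (ω, α) * U i α ω} := by
    rw [hS]
    ext p
    simp only [Set.mem_setOf_eq]
    refine and_congr_right fun hp => and_congr_right fun _ => ?_
    have hc := fun i : Fin N => aux_char (fun ω : Ω0 × (∀ j, Ωp j) => ω.2 i)
      (fun α : ∀ j, A j => α i) (fun ω α => π ω * p (ω, α))
      (fun ω α => mul_nonneg (hπ0 ω) (hp _)) (fun ω α => U i α ω)
      (fun β ω α => U i (Function.update α i β) ω) (umax i) (humax i)
      (fun β ω α => hU _ _ _)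
    constructor
    · rintro ⟨θ, h1, h2, h3⟩ i
      exact (hc i).1 ⟨θ i, h1 i, h2 i, h3 i⟩
    · intro H
      choose θ h1 h2 h3 using fun i => (hc i).2 (H i)
      exact ⟨θ, h1, h2, h3⟩
  clear hS
  subst hS'
  refine ⟨?_, ?_, ?_⟩
  · simp only [Set.setOf_and, Set.setOf_forall]
    refine IsClosed.inter ?_ (IsClosed.inter ?_ ?_)
    · exact isClosed_iInter fun x => isClosed_le (by fun_prop) (by fun_prop)
    · exact isClosed_iInter fun x => isClosed_eq (by fun_prop) (by fun_prop)
    · exact isClosed_iInter fun i => isClosed_iInter fun b =>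
        isClosed_le (by fun_prop) (by fun_prop)
  · refine (Metric.isBounded_Icc (0 : (Ω0 × (∀ j, Ωp j)) × (∀ j, A j) → ℝ) 1).subset ?_
    rintro p ⟨h0, h1, -⟩
    refine ⟨fun x => h0 x, fun x => ?_⟩
    rw [Pi.one_apply, ← h1 x.1]
    exact Finset.single_le_sum (f := fun α => p (x.1, α)) (fun α _ => h0 _) (Finset.mem_univ x.2)
  · rintro p ⟨p0, p1, p2⟩ q ⟨q0, q1, q2⟩ s t hs ht hst
    have hlin : ∀ f : Ω0 × (∀ j, Ωp j) → (∀ j, A j) → ℝ,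
        ∑ ω : Ω0 × (∀ j, Ωp j), ∑ α : ∀ j, A j, π ω * (s • p + t • q) (ω, α) * f ω α =
        s * (∑ ω : Ω0 × (∀ j, Ωp j), ∑ α : ∀ j, A j, π ω * p (ω, α) * f ω α) +
        t * (∑ ω : Ω0 × (∀ j, Ωp j), ∑ α : ∀ j, A j, π ω * q (ω, α) * f ω α) := by
      intro f
      simp only [Finset.mul_sum, ← Finset.sum_add_distrib]
      refine Finset.sum_congr rfl fun ω _ => Finset.sum_congr rfl fun α _ => ?_
      simp only [Pi.add_apply, Pi.smul_apply, smul_eq_mul]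
      ring
    refine ⟨fun x => ?_, fun ω => ?_, fun i b => ?_⟩
    · exact add_nonneg (mul_nonneg hs (p0 x)) (mul_nonneg ht (q0 x))
    · simp only [Pi.add_apply, Pi.smul_apply, smul_eq_mul, Finset.sum_add_distrib,
        ← Finset.mul_sum, p1, q1]
      linarith
    · rw [hlin (fun ω α => U i (Function.update α i (b (ω.2 i) (α i))) ω),
        hlin (fun ω α => U i α ω)]
      exact add_le_add (mul_le_mul_of_nonneg_left (p2 i b) hs)
        (mul_le_mul_of_nonneg_left (q2 i b) ht)
end

section
/- A conditional probability mass function P is a CCE for the stochastic game if and only if for every player i ∈ {1,…,N} and every randomized deviation q_i for player i: ∑_{ω∈Ω} ∑_{α∈𝒜} π(ω)P(α|ω)û_i(α, ω) ≥ ∑_{ω∈Ω} ∑_{α∈𝒜} π(ω)P(α|ω) ∑_{β∈A_i} q_i(β|ω_i)û_i((β, α_{-i}), ω). -/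
open Finset

theorem aux1 {W V S B : Type} [Fintype W] [Fintype V] [Fintype S] [Fintype B] [DecidableEq V]
    (f : W → V) (w : W → S → ℝ) (G : B → S → W → ℝ) (q : V → B → ℝ) :
    ∑ x : W, ∑ a : S, w x a * (∑ b : B, q (f x) b * G b a x) =
    ∑ v : V, ∑ b : B, q v b *
      ∑ x ∈ Finset.univ.filter (fun x => f x = v), ∑ a : S, w x a * G b a x := by
  rw [← Finset.sum_fiberwise (s := Finset.univ) (g := f)]
  refine Finset.sum_congr rfl fun v _ => ?_
  simp_rw [Finset.mul_sum]
  rw [Finset.sum_comm (s := (Finset.univ : Finset B))]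
  refine Finset.sum_congr rfl fun x hx => ?_
  rw [Finset.sum_comm]
  have hx' : f x = v := (Finset.mem_filter.mp hx).2
  subst hx'
  refine Finset.sum_congr rfl fun b _ => Finset.sum_congr rfl fun a _ => ?_
  ring

theorem aux2 {W V S : Type} [Fintype W] [Fintype V] [Fintype S] [DecidableEq V]
    (f : W → V) (w : W → S → ℝ) (θ : V → ℝ) :
    ∑ x : W, ∑ a : S, w x a * θ (f x) =
    ∑ v : V, ∑ x ∈ Finset.univ.filter (fun x => f x = v), ∑ a : S, w x a * θ v := by
  rw [← Finset.sum_fiberwise (s := Finset.univ) (g := f)]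
  refine Finset.sum_congr rfl fun v _ => Finset.sum_congr rfl fun x hx => ?_
  rw [(Finset.mem_filter.mp hx).2]

theorem aux3 {W S B : Type} [Fintype S] [Fintype B] [Nonempty B]
    (F : Finset W) (w : W → S → ℝ) (hw : ∀ x a, 0 ≤ w x a) (G : B → S → W → ℝ) (u : ℝ)
    (hu : 0 ≤ u) (hG : ∀ b a x, G b a x ∈ Set.Icc 0 u) :
    ∃ (t : ℝ) (b : B), t ∈ Set.Icc 0 u ∧
      (∑ x ∈ F, ∑ a : S, w x a * t = ∑ x ∈ F, ∑ a : S, w x a * G b a x) ∧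
      ∀ c, ∑ x ∈ F, ∑ a : S, w x a * t ≥ ∑ x ∈ F, ∑ a : S, w x a * G c a x := by
  obtain ⟨b, hb⟩ := Finite.exists_max (fun b => ∑ x ∈ F, ∑ a : S, w x a * G b a x)
  have h0 : 0 ≤ ∑ x ∈ F, ∑ a : S, w x a * G b a x :=
    Finset.sum_nonneg fun x _ => Finset.sum_nonneg fun a _ => mul_nonneg (hw x a) (hG b a x).1
  have h1 : ∑ x ∈ F, ∑ a : S, w x a * G b a x ≤ (∑ x ∈ F, ∑ a : S, w x a) * u := by
    simp_rw [Finset.sum_mul]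
    exact Finset.sum_le_sum fun x _ => Finset.sum_le_sum fun a _ =>
      mul_le_mul_of_nonneg_left (hG b a x).2 (hw x a)
  have hM : 0 ≤ ∑ x ∈ F, ∑ a : S, w x a :=
    Finset.sum_nonneg fun x _ => Finset.sum_nonneg fun a _ => hw x a
  have e : ∑ x ∈ F, ∑ a : S, w x a *
      ((∑ x ∈ F, ∑ a : S, w x a * G b a x) / (∑ x ∈ F, ∑ a : S, w x a)) =
      ∑ x ∈ F, ∑ a : S, w x a * G b a x := by
    simp_rw [← Finset.sum_mul]
    rcases hM.eq_or_lt with h | h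
    · rw [← h] at h1 ⊢
      linarith
    · exact mul_div_cancel₀ _ h.ne'
  refine ⟨_, b, ⟨div_nonneg h0 hM, div_le_of_le_mul₀ hM hu (by linarith)⟩, e, fun c => ?_⟩
  rw [e]
  exact hb c

/-- A conditional pmf `P` is a CCE for the stochastic game iff no player
can improve by any randomized deviation `q i : Ωp i → pmf on A i`. -/
theorem statement11
    (N : ℕ) (hN : 1 ≤ N)
    (Ω0 : Type) (Ωp : Fin N → Type) (A : Fin N → Type)
    [Fintype Ω0] [Nonempty Ω0]
    [∀ i, Fintype (Ωp i)] [∀ i, Nonempty (Ωp i)] [∀ i, DecidableEq (Ωp i)]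
    [∀ i, Fintype (A i)] [∀ i, Nonempty (A i)] [∀ i, DecidableEq (A i)]
    (π : Ω0 × (∀ j, Ωp j) → ℝ)
    (hπ0 : ∀ ω, 0 ≤ π ω) (hπ1 : ∑ ω : Ω0 × (∀ j, Ωp j), π ω = 1)
    (U : ∀ _ : Fin N, (∀ j, A j) → Ω0 × (∀ j, Ωp j) → ℝ)
    (umax : Fin N → ℝ) (humax : ∀ i, 0 ≤ umax i)
    (hU : ∀ i α ω, U i α ω ∈ Set.Icc 0 (umax i))
    (P : Ω0 × (∀ j, Ωp j) → (∀ j, A j) → ℝ)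
    (hP0 : ∀ ω α, 0 ≤ P ω α)
    (hP1 : ∀ ω, ∑ α : ∀ j, A j, P ω α = 1) :
    -- `P` is a CCE for the stochastic game ...
    (∃ θ : ∀ i : Fin N, Ωp i → ℝ,
      (∀ i v, θ i v ∈ Set.Icc 0 (umax i)) ∧
      (∀ i : Fin N,
        ∑ ω : Ω0 × (∀ j, Ωp j), ∑ α : ∀ j, A j, π ω * P ω α * U i α ω ≥
        ∑ ω : Ω0 × (∀ j, Ωp j), ∑ α : ∀ j, A j, π ω * P ω α * θ i (ω.2 i)) ∧
      (∀ (i : Fin N) (v : Ωp i) (β : A i),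
        ∑ ω ∈ Finset.univ.filter (fun ω : Ω0 × (∀ j, Ωp j) => ω.2 i = v),
          ∑ α : ∀ j, A j, π ω * P ω α * θ i v ≥
        ∑ ω ∈ Finset.univ.filter (fun ω : Ω0 × (∀ j, Ωp j) => ω.2 i = v),
          ∑ α : ∀ j, A j, π ω * P ω α * U i (Function.update α i β) ω))
    ↔
    -- ... iff unilateral randomized deviations cannot increase utility
    (∀ (i : Fin N) (q : Ωp i → A i → ℝ),
      (∀ v β, 0 ≤ q v β) → (∀ v, ∑ β : A i, q v β = 1) →
      ∑ ω : Ω0 × (∀ j, Ωp j), ∑ α : ∀ j, A j, π ω * P ω α * U i α ω ≥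
      ∑ ω : Ω0 × (∀ j, Ωp j), ∑ α : ∀ j, A j, π ω * P ω α *
        (∑ β : A i, q (ω.2 i) β * U i (Function.update α i β) ω)) := by
  have hw : ∀ ω α, 0 ≤ π ω * P ω α := fun ω α => mul_nonneg (hπ0 ω) (hP0 ω α)
  constructor
  · rintro ⟨θ, -, h1, h2⟩ i q hq0 hq1
    refine ge_trans (h1 i) ?_
    rw [aux1 (fun ω : Ω0 × (∀ j, Ωp j) => ω.2 i) (fun ω α => π ω * P ω α)
      (fun β α ω => U i (Function.update α i β) ω) q,
      aux2 (fun ω : Ω0 × (∀ j, Ωp j) => ω.2 i) (fun ω α => π ω * P ω α) (θ i)]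
    refine Finset.sum_le_sum fun v _ => ?_
    refine (Finset.sum_le_sum fun β _ => mul_le_mul_of_nonneg_left (h2 i v β) (hq0 v β)).trans ?_
    rw [← Finset.sum_mul, hq1, one_mul]
  · intro h
    choose θ b hθ he hm using fun (i : Fin N) (v : Ωp i) =>
      aux3 (Finset.univ.filter (fun ω : Ω0 × (∀ j, Ωp j) => ω.2 i = v))
        (fun ω α => π ω * P ω α) hw (fun (β : A i) α ω => U i (Function.update α i β) ω)
        (umax i) (humax i) (fun β α ω => hU i _ ω)
    refine ⟨θ, hθ, fun i => ?_, hm⟩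
    have := h i (fun v β => if β = b i v then 1 else 0) (fun v β => by split_ifs <;> norm_num)
      (fun v => by simp)
    refine ge_trans this (le_of_eq ?_)
    rw [aux1 (fun ω : Ω0 × (∀ j, Ωp j) => ω.2 i) (fun ω α => π ω * P ω α)
      (fun β α ω => U i (Function.update α i β) ω) (fun v β => if β = b i v then 1 else 0),
      aux2 (fun ω : Ω0 × (∀ j, Ωp j) => ω.2 i) (fun ω α => π ω * P ω α) (θ i)]
    refine Finset.sum_congr rfl fun v _ => ?_
    simpa using he i v
end

section
/- A conditional probability mass function P is a CE for the stochastic game if and only if for every player i ∈ {1,…,N} and every action-aware randomized deviation q_i for player i: ∑_{ω∈Ω} ∑_{α∈𝒜} π(ω)P(α|ω)û_i(α, ω) ≥ ∑_{ω∈Ω} ∑_{α∈𝒜} π(ω)P(α|ω) ∑_{β∈A_i} q_i(β|ω_i, α_i)û_i((β, α_{-i}), ω). -/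
open Finset

theorem ce_fiber {W S V C : Type} [Fintype W] [Fintype S] [Fintype V] [Fintype C]
    [DecidableEq V] [DecidableEq C] (f : W → V) (g : S → C) (F : W → S → ℝ) :
    ∑ ω, ∑ α, F ω α = ∑ v, ∑ c, ∑ ω ∈ univ.filter (fun ω => f ω = v),
      ∑ α ∈ univ.filter (fun α => g α = c), F ω α := by
  rw [← Finset.sum_fiberwise univ f (fun ω => ∑ α, F ω α)]
  refine Finset.sum_congr rfl fun v _ => ?_
  rw [Finset.sum_comm (s := (univ : Finset C))]
  refine Finset.sum_congr rfl fun ω _ => ?_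
  rw [← Finset.sum_fiberwise univ g (fun α => F ω α)]

theorem ce_aux {W S V C : Type} [Fintype W] [Fintype S] [Fintype V] [Fintype C]
    [DecidableEq V] [DecidableEq C] [Nonempty C] (f : W → V) (g : S → C)
    (w u : W → S → ℝ) (hw : ∀ ω α, 0 ≤ w ω α) (D : C → W → S → ℝ) (M : ℝ) (hM : 0 ≤ M)
    (hD : ∀ β ω α, D β ω α ∈ Set.Icc 0 M) :
    (∃ θ : V → C → ℝ, (∀ v c, θ v c ∈ Set.Icc 0 M) ∧
      (∑ ω, ∑ α, w ω α * (u ω α - θ (f ω) (g α)) ≥ 0) ∧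
      (∀ v c β, ∑ ω ∈ univ.filter (fun ω => f ω = v), ∑ α ∈ univ.filter (fun α => g α = c),
          w ω α * θ v c ≥
        ∑ ω ∈ univ.filter (fun ω => f ω = v), ∑ α ∈ univ.filter (fun α => g α = c),
          w ω α * D β ω α)) ↔
    (∀ q : V → C → C → ℝ, (∀ v c β, 0 ≤ q v c β) → (∀ v c, ∑ β, q v c β = 1) →
      ∑ ω, ∑ α, w ω α * u ω α ≥
      ∑ ω, ∑ α, w ω α * ∑ β, q (f ω) (g α) β * D β ω α) := by
  have key : ∀ q : V → C → C → ℝ,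
      ∑ ω, ∑ α, w ω α * ∑ β, q (f ω) (g α) β * D β ω α =
      ∑ v, ∑ c, ∑ β, q v c β * ∑ ω ∈ univ.filter (fun ω => f ω = v),
        ∑ α ∈ univ.filter (fun α => g α = c), w ω α * D β ω α := by
    intro q
    rw [ce_fiber f g]
    refine sum_congr rfl fun v _ => sum_congr rfl fun c _ => ?_
    simp_rw [mul_sum]
    rw [sum_comm (s := (univ : Finset C))]
    refine sum_congr rfl fun ω hω => ?_
    rw [sum_comm (s := (univ : Finset C))]
    refine sum_congr rfl fun α hα => sum_congr rfl fun β _ => ?_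
    rw [(mem_filter.1 hω).2, (mem_filter.1 hα).2]; ring
  have key2 : ∀ θ : V → C → ℝ, ∑ ω, ∑ α, w ω α * (u ω α - θ (f ω) (g α)) =
      ∑ ω, ∑ α, w ω α * u ω α - ∑ v, ∑ c, ∑ ω ∈ univ.filter (fun ω => f ω = v),
        ∑ α ∈ univ.filter (fun α => g α = c), w ω α * θ v c := by
    intro θ
    simp_rw [mul_sub, sum_sub_distrib]
    congr 1
    rw [ce_fiber f g]
    refine sum_congr rfl fun v _ => sum_congr rfl fun c _ => sum_congr rfl fun ω hω =>
      sum_congr rfl fun α hα => ?_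
    rw [(mem_filter.1 hω).2, (mem_filter.1 hα).2]
  constructor
  · rintro ⟨θ, -, h1, h2⟩ q hq0 hq1
    rw [key2] at h1
    rw [key]
    refine le_trans ?_ (sub_nonneg.1 h1)
    refine sum_le_sum fun v _ => sum_le_sum fun c _ => ?_
    refine (sum_le_sum fun β _ => mul_le_mul_of_nonneg_left (h2 v c β) (hq0 v c β)).trans ?_
    rw [← sum_mul, hq1, one_mul]
  · intro h
    let d : V → C → C → ℝ := fun v c β => ∑ ω ∈ univ.filter (fun ω => f ω = v),
        ∑ α ∈ univ.filter (fun α => g α = c), w ω α * D β ω α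
    let m : V → C → ℝ := fun v c => ∑ ω ∈ univ.filter (fun ω => f ω = v),
        ∑ α ∈ univ.filter (fun α => g α = c), w ω α
    have hd0 : ∀ v c β, 0 ≤ d v c β := fun v c β => sum_nonneg fun ω _ => sum_nonneg fun α _ =>
      mul_nonneg (hw _ _) (hD _ _ _).1
    have hm0 : ∀ v c, 0 ≤ m v c := fun v c => sum_nonneg fun ω _ => sum_nonneg fun α _ => hw _ _
    have hmt : ∀ v c t, ∑ ω ∈ univ.filter (fun ω => f ω = v),
        ∑ α ∈ univ.filter (fun α => g α = c), w ω α * t = m v c * t := by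
      intro v c t
      simp only [m, sum_mul]
    have hdm : ∀ v c β, d v c β ≤ m v c * M := by
      intro v c β
      rw [← hmt]
      exact sum_le_sum fun ω _ => sum_le_sum fun α _ =>
        mul_le_mul_of_nonneg_left (hD _ _ _).2 (hw _ _)
    have hmax : ∀ v c, ∃ b, ∀ β, d v c β ≤ d v c b := fun v c => Finite.exists_max (d v c)
    choose b hb using hmax
    have hθ : ∀ v c, ∃ t, t ∈ Set.Icc 0 M ∧ m v c * t = d v c (b v c) := by
      intro v c
      rcases (hm0 v c).eq_or_lt with h0 | h0
      · refine ⟨0, ⟨le_rfl, hM⟩, ?_⟩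
        have := hdm v c (b v c)
        have := hd0 v c (b v c)
        rw [← h0] at *
        linarith
      · refine ⟨d v c (b v c) / m v c, ⟨div_nonneg (hd0 _ _ _) h0.le, ?_⟩, ?_⟩
        · rw [div_le_iff₀ h0, mul_comm]; exact hdm _ _ _
        · field_simp
    choose θ hθ1 hθ2 using hθ
    refine ⟨θ, hθ1, ?_, ?_⟩
    · rw [key2]
      have hq := h (fun v c β => if β = b v c then 1 else 0)
        (fun v c β => by split_ifs <;> norm_num) (fun v c => by simp)
      rw [key (fun v c β => if β = b v c then 1 else 0)] at hq
      refine sub_nonneg.2 (le_trans (le_of_eq ?_) hq)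
      refine sum_congr rfl fun v _ => sum_congr rfl fun c _ => ?_
      rw [hmt, hθ2]
      simp [d]
    · intro v c β
      rw [hmt, hθ2]
      exact hb v c β

/-- A conditional pmf `P` is a CE for the stochastic game iff no player
can improve by any action-aware randomized deviation `q i : Ωp i → A i → pmf on A i`. -/
theorem statement12
    (N : ℕ) (hN : 1 ≤ N)
    (Ω0 : Type) (Ωp : Fin N → Type) (A : Fin N → Type)
    [Fintype Ω0] [Nonempty Ω0]
    [∀ i, Fintype (Ωp i)] [∀ i, Nonempty (Ωp i)] [∀ i, DecidableEq (Ωp i)]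
    [∀ i, Fintype (A i)] [∀ i, Nonempty (A i)] [∀ i, DecidableEq (A i)]
    (π : Ω0 × (∀ j, Ωp j) → ℝ)
    (hπ0 : ∀ ω, 0 ≤ π ω) (hπ1 : ∑ ω : Ω0 × (∀ j, Ωp j), π ω = 1)
    (U : ∀ _ : Fin N, (∀ j, A j) → Ω0 × (∀ j, Ωp j) → ℝ)
    (umax : Fin N → ℝ) (humax : ∀ i, 0 ≤ umax i)
    (hU : ∀ i α ω, U i α ω ∈ Set.Icc 0 (umax i))
    (P : Ω0 × (∀ j, Ωp j) → (∀ j, A j) → ℝ)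
    (hP0 : ∀ ω α, 0 ≤ P ω α)
    (hP1 : ∀ ω, ∑ α : ∀ j, A j, P ω α = 1) :
    -- `P` is a CE for the stochastic game ...
    (∃ θ : ∀ i : Fin N, Ωp i → A i → ℝ,
      (∀ i v c, θ i v c ∈ Set.Icc 0 (umax i)) ∧
      (∀ i : Fin N,
        ∑ ω : Ω0 × (∀ j, Ωp j), ∑ α : ∀ j, A j,
          π ω * P ω α * (U i α ω - θ i (ω.2 i) (α i)) ≥ 0) ∧
      (∀ (i : Fin N) (v : Ωp i) (c : A i) (β : A i),
        ∑ ω ∈ Finset.univ.filter (fun ω : Ω0 × (∀ j, Ωp j) => ω.2 i = v),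
          ∑ α ∈ Finset.univ.filter (fun α : ∀ j, A j => α i = c),
            π ω * P ω α * θ i v c ≥
        ∑ ω ∈ Finset.univ.filter (fun ω : Ω0 × (∀ j, Ωp j) => ω.2 i = v),
          ∑ α ∈ Finset.univ.filter (fun α : ∀ j, A j => α i = c),
            π ω * P ω α * U i (Function.update α i β) ω))
    ↔
    -- ... iff action-aware unilateral randomized deviations cannot increase utility
    (∀ (i : Fin N) (q : Ωp i → A i → A i → ℝ),
      (∀ v c β, 0 ≤ q v c β) → (∀ v c, ∑ β : A i, q v c β = 1) →
      ∑ ω : Ω0 × (∀ j, Ωp j), ∑ α : ∀ j, A j, π ω * P ω α * U i α ω ≥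
      ∑ ω : Ω0 × (∀ j, Ωp j), ∑ α : ∀ j, A j, π ω * P ω α *
        (∑ β : A i, q (ω.2 i) (α i) β * U i (Function.update α i β) ω)) := by
  have H := fun i : Fin N => ce_aux (fun ω : Ω0 × (∀ j, Ωp j) => ω.2 i) (fun α : ∀ j, A j => α i)
    (fun ω α => π ω * P ω α) (fun ω α => U i α ω) (fun ω α => mul_nonneg (hπ0 ω) (hP0 ω α))
    (fun β ω α => U i (Function.update α i β) ω) (umax i) (humax i) (fun β ω α => hU i _ ω)
  constructor
  · rintro ⟨θ, h0, h1, h2⟩ i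
    exact (H i).1 ⟨θ i, h0 i, h1 i, h2 i⟩
  · intro h
    choose θ h0 h1 h2 using fun i => (H i).2 (h i)
    exact ⟨θ, h0, h1, h2⟩
end

section
/- (Theorem 1(a), deterministic form.) For all integers T ≥ 1, φ((1/T)∑_{t=0}^{T−1} γ(t)) ≥ φ* − B/V. -/
open Finset

/-- Theorem 1(a), deterministic form: under the per-slot drift bound,
for all `T ≥ 1`, `φ((1/T)∑_{t<T} γ(t)) ≥ φ* − B/V`. -/
theorem statement14
    (N : ℕ) (hN : 1 ≤ N)
    (umax : Fin N → ℝ) (humax : ∀ i, 0 ≤ umax i)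
    (φ : (Fin N → ℝ) → ℝ)
    (hφ : ConcaveOn ℝ {x : Fin N → ℝ | ∀ i, x i ∈ Set.Icc 0 (umax i)} φ)
    (V B φstar : ℝ) (hV : 0 < V) (hB : 0 ≤ B)
    (L : ℕ → ℝ) (hL0 : L 0 = 0) (hLnn : ∀ t, 0 ≤ L t)
    (γ : ℕ → Fin N → ℝ) (hγ : ∀ t i, γ t i ∈ Set.Icc 0 (umax i))
    (hdrift : ∀ t : ℕ, L (t + 1) - L t - V * φ (γ t) ≤ B - V * φstar) :
    ∀ T : ℕ, 1 ≤ T →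
      φ (fun i => (∑ t ∈ Finset.range T, γ t i) / (T : ℝ)) ≥ φstar - B / V := by
  intro T hT
  have hTpos : (0 : ℝ) < (T : ℝ) := by exact_mod_cast hT
  have hsum : ∀ n : ℕ, L n - V * ∑ t ∈ Finset.range n, φ (γ t) ≤ (n : ℝ) * (B - V * φstar) := by
    intro n
    induction n with
    | zero => simp [hL0]
    | succ k ih =>
      rw [Finset.sum_range_succ]
      push_cast
      have := hdrift k
      linarith
  have hJ := hφ.le_map_sum (t := Finset.range T) (w := fun _ => (T : ℝ)⁻¹) (p := γ)
    (fun _ _ => by positivity)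
    (by simp [hTpos.ne']) (fun t _ => hγ t)
  have heq : (∑ t ∈ Finset.range T, (T : ℝ)⁻¹ • γ t)
      = fun i => (∑ t ∈ Finset.range T, γ t i) / (T : ℝ) := by
    funext i
    rw [← Finset.smul_sum]
    simp only [Pi.smul_apply, Finset.sum_apply, smul_eq_mul]
    rw [div_eq_inv_mul]
  rw [heq, ← Finset.smul_sum, smul_eq_mul] at hJ
  refine le_trans ?_ hJ
  have h1 := hsum T
  have h2 := hLnn T
  rw [← div_eq_inv_mul, le_div_iff₀ hTpos]
  have h3 : V * ((φstar - B / V) * T) = (V * φstar - B) * T := by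
    field_simp
  refine le_of_mul_le_mul_left ?_ hV
  rw [h3]
  linarith
end
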